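/- Let r > 13/8. There is θ₀ > 0 such that for every θ ∈ (0,θ₀) there exists a constant C = C(r,θ) with the following property: for all ε, μ ∈ (0,1], all T > 0, and every solution η of the Whitham equation ∂_t η + √T_μ(D) ∂_x η + (ε/2) ∂_x(η²) = 0 on [0,T], with t ↦ η(·,t) a C¹ curve in the Schwartz space 𝓢(ℝ), one has (∫_0^T ‖∂_x η(t)‖_{L^∞(ℝ)}^2 dt)^{1/2} ≤ C [ μ^{−1/5+2θ/5} T^{3/10+2θ/5} sup_{t∈[0,T]} ‖η(t)‖_{H^r} + ε μ^{−2/5+θ/5} T^{11/10+θ/5} ( sup_{t∈[0,T]} ‖η(t)‖_{H^r} )² ]. -/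

import Mathlib

noncomputable section

open MeasureTheory SchwartzMap
open scoped FourierTransform ENNReal

/-- The Japanese bracket `⟨x⟩ = (1 + x²)^{1/2}`. -/
def jap (x : ℝ) : ℝ := (1 + x ^ 2) ^ ((1 : ℝ) / 2)

/-- The symbol `T_μ(ξ) = tanh(√μ |ξ|)/(√μ |ξ|)` for `ξ ≠ 0`, with value `1` at `ξ = 0`. -/
def Tsymb (μ ξ : ℝ) : ℝ :=
  if ξ = 0 then 1 else Real.tanh (Real.sqrt μ * |ξ|) / (Real.sqrt μ * |ξ|)

/-- Complexification of a real-valued function. -/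
def cc (f : ℝ → ℝ) : ℝ → ℂ := fun x => (f x : ℂ)

/-- The multiplier `√T_μ(D)`, `(√T_μ(D) g)^(ξ) = T_μ(ξ)^{1/2} ĝ(ξ)`. -/
def sqrtTmul (μ : ℝ) (g : ℝ → ℂ) : ℝ → ℂ :=
  𝓕⁻ (fun ξ : ℝ => ((Real.sqrt (Tsymb μ ξ) : ℝ) : ℂ) * 𝓕 g ξ)

/-- The `H^r`-norm `‖f‖_{H^r} = ‖⟨ξ⟩^r f̂‖_{L²}` (as an extended nonnegative real). -/
def HsNorm (r : ℝ) (f : ℝ → ℂ) : ℝ≥0∞ :=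
  eLpNorm (fun ξ : ℝ => jap ξ ^ r * ‖𝓕 f ξ‖) 2 volume

/-!
On the frequency side a solution satisfies Duhamel's formula for the linear flow. Frequencies
`|ξ| ∼ N` disperse at the rate given by the second derivative of the dispersion relation, so
van der Corput's lemma and a `TT*` argument bound the solution in `L²_t L^∞_x` on a short time
interval. Cutting `[0, T]` into about `(T μ) ^ (1 / 5) max(N, 1)` intervals and restarting Duhamel's
formula on each of them balances the loss of summing over the intervals against the derivative in
the nonlinearity, which is then estimated in `H^r` as an algebra. The dyadic pieces sum
geometrically for `r > 13 / 8`. When `T μ ≤ 1`, Sobolev embedding at fixed time suffices.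
-/

namespace Whitham

section VanDerCorput

open Complex

variable {φ φ' φ'' : ℝ → ℝ} {a b : ℝ}

lemma integral_cexp_mul_I_eq (hab : a ≤ b)
    (hφ : ∀ x ∈ Set.Icc a b, HasDerivAt φ (φ' x) x)
    (hφ' : ∀ x ∈ Set.Icc a b, HasDerivAt φ' (φ'' x) x)
    (hcont : ContinuousOn φ'' (Set.Icc a b)) (hne : ∀ x ∈ Set.Icc a b, φ' x ≠ 0) :
    (∫ x in a..b, cexp (φ x * I)) * I =
      cexp (φ b * I) * ((φ' b)⁻¹ : ℝ) - cexp (φ a * I) * ((φ' a)⁻¹ : ℝ) +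
        ∫ x in a..b, cexp (φ x * I) * ((φ'' x / φ' x ^ 2 : ℝ) : ℂ) := by
  have hIcc : Set.uIcc a b = Set.Icc a b := Set.uIcc_of_le hab
  have hφc : ContinuousOn φ (Set.Icc a b) := fun x hx ↦ (hφ x hx).continuousAt.continuousWithinAt
  have hφc' : ContinuousOn φ' (Set.Icc a b) :=
    fun x hx ↦ (hφ' x hx).continuousAt.continuousWithinAt
  have hderiv : ∀ x ∈ Set.uIcc a b, HasDerivAt (fun x ↦ cexp (φ x * I) * ((φ' x)⁻¹ : ℝ))
      (cexp (φ x * I) * I - cexp (φ x * I) * ((φ'' x / φ' x ^ 2 : ℝ) : ℂ)) x := by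
    intro x hx
    rw [hIcc] at hx
    have hneC : (φ' x : ℂ) ≠ 0 := ofReal_ne_zero.2 (hne x hx)
    have hinv : HasDerivAt (fun x ↦ (((φ' x)⁻¹ : ℝ) : ℂ)) ((-φ'' x / φ' x ^ 2 : ℝ) : ℂ) x :=
      ((hφ' x hx).inv (hne x hx)).ofReal_comp
    refine (((hφ x hx).ofReal_comp.mul_const I).cexp.mul hinv).congr_deriv ?_
    push_cast
    field_simp
    ring
  have hint : IntervalIntegrable (fun x ↦ cexp (φ x * I) * I) volume a b :=
    ContinuousOn.intervalIntegrable (by rw [hIcc]; fun_prop)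
  have hint' : IntervalIntegrable
      (fun x ↦ cexp (φ x * I) * ((φ'' x / φ' x ^ 2 : ℝ) : ℂ)) volume a b := by
    refine ContinuousOn.intervalIntegrable ?_
    rw [hIcc]
    exact ContinuousOn.mul (by fun_prop) (continuous_ofReal.comp_continuousOn
      (hcont.div (hφc'.pow 2) fun x hx ↦ pow_ne_zero 2 (hne x hx)))
  have hftc := intervalIntegral.integral_eq_sub_of_hasDerivAt hderiv (hint.sub hint')
  rw [intervalIntegral.integral_sub hint hint', intervalIntegral.integral_mul_const] at hftc
  linear_combination hftc

/-- The remaining integral of `φ'' / φ'²` is exact because `φ''` has a sign. -/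
lemma norm_integral_cexp_le_of_le_deriv {δ : ℝ} (hab : a ≤ b) (hδ : 0 < δ)
    (hφ : ∀ x ∈ Set.Icc a b, HasDerivAt φ (φ' x) x)
    (hφ' : ∀ x ∈ Set.Icc a b, HasDerivAt φ' (φ'' x) x)
    (hcont : ContinuousOn φ'' (Set.Icc a b)) (hnonneg : ∀ x ∈ Set.Icc a b, 0 ≤ φ'' x)
    (hle : ∀ x ∈ Set.Icc a b, δ ≤ φ' x) :
    ‖∫ x in a..b, cexp (φ x * I)‖ ≤ 3 / δ := by
  have hIcc : Set.uIcc a b = Set.Icc a b := Set.uIcc_of_le hab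
  have hne : ∀ x ∈ Set.Icc a b, φ' x ≠ 0 := fun x hx ↦ (hδ.trans_le (hle x hx)).ne'
  have hφc' : ContinuousOn φ' (Set.Icc a b) :=
    fun x hx ↦ (hφ' x hx).continuousAt.continuousWithinAt
  have hint : IntervalIntegrable (fun x ↦ φ'' x / φ' x ^ 2) volume a b :=
    ContinuousOn.intervalIntegrable
      (by rw [hIcc]; exact hcont.div (hφc'.pow 2) fun x hx ↦ pow_ne_zero 2 (hne x hx))
  have hexact : ∫ x in a..b, φ'' x / φ' x ^ 2 = (φ' a)⁻¹ - (φ' b)⁻¹ := by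
    rw [intervalIntegral.integral_eq_sub_of_hasDerivAt (f := fun x ↦ -(φ' x)⁻¹)
      (fun x hx ↦ ((hφ' x (hIcc ▸ hx)).inv (hne x (hIcc ▸ hx))).neg.congr_deriv (by ring)) hint]
    ring
  have hremainder : ‖∫ x in a..b, cexp (φ x * I) * ((φ'' x / φ' x ^ 2 : ℝ) : ℂ)‖ ≤
      (φ' a)⁻¹ - (φ' b)⁻¹ := by
    rw [← hexact]
    refine intervalIntegral.norm_integral_le_of_norm_le hab (.of_forall fun x hx ↦ ?_) hint
    have := hnonneg x ⟨hx.1.le, hx.2⟩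
    rw [norm_mul, norm_exp_ofReal_mul_I, one_mul, norm_real, Real.norm_of_nonneg (by positivity)]
  have hboundary : ∀ x ∈ Set.Icc a b, ‖cexp (φ x * I) * ((φ' x)⁻¹ : ℝ)‖ ≤ δ⁻¹ := fun x hx ↦ by
    rw [norm_mul, norm_exp_ofReal_mul_I, one_mul, norm_real,
      Real.norm_of_nonneg (inv_nonneg.2 (hδ.le.trans (hle x hx)))]
    exact inv_anti₀ hδ (hle x hx)
  have hinv_a : (φ' a)⁻¹ ≤ δ⁻¹ := inv_anti₀ hδ (hle a ⟨le_rfl, hab⟩)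
  have hinv_b : 0 ≤ (φ' b)⁻¹ := inv_nonneg.2 (hδ.le.trans (hle b ⟨hab, le_rfl⟩))
  calc ‖∫ x in a..b, cexp (φ x * I)‖
      = ‖(∫ x in a..b, cexp (φ x * I)) * I‖ := by simp
    _ ≤ δ⁻¹ + δ⁻¹ + ((φ' a)⁻¹ - (φ' b)⁻¹) := by
      rw [integral_cexp_mul_I_eq hab hφ hφ' hcont hne]
      refine (norm_add_le _ _).trans (add_le_add ((norm_sub_le _ _).trans ?_) hremainder)
      exact add_le_add (hboundary b ⟨hab, le_rfl⟩) (hboundary a ⟨le_rfl, hab⟩)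
    _ ≤ 3 / δ := by rw [div_eq_mul_inv]; linarith

/-- Beyond distance `1 / √l` from `a` the first-derivative test applies with `δ = √l`; nearer to `a`
the integrand is bounded by `1`. -/
lemma norm_integral_cexp_le_of_mul_sub_le_deriv {l : ℝ} (hab : a ≤ b) (hl : 0 < l)
    (hφ : ∀ x ∈ Set.Icc a b, HasDerivAt φ (φ' x) x)
    (hφ' : ∀ x ∈ Set.Icc a b, HasDerivAt φ' (φ'' x) x)
    (hcont : ContinuousOn φ'' (Set.Icc a b)) (hnonneg : ∀ x ∈ Set.Icc a b, 0 ≤ φ'' x)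
    (hle : ∀ x ∈ Set.Ioc a b, l * (x - a) ≤ φ' x) :
    ‖∫ x in a..b, cexp (φ x * I)‖ ≤ 4 / √l := by
  have hs : 0 < √l := Real.sqrt_pos.2 hl
  have hinv : 0 < (√l)⁻¹ := inv_pos.2 hs
  have hnear : ∀ {q : ℝ}, a ≤ q → q - a ≤ (√l)⁻¹ →
      ‖∫ x in a..q, cexp (φ x * I)‖ ≤ 1 / √l := fun {q} haq hq ↦ by
    refine (intervalIntegral.norm_integral_le_of_norm_le_const (C := 1)
      fun x _ ↦ (norm_exp_ofReal_mul_I _).le).trans ?_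
    rwa [abs_of_nonneg (sub_nonneg.2 haq), one_mul, one_div]
  rcases le_total b (a + (√l)⁻¹) with hb | hb
  · exact (hnear hab (by linarith)).trans (by gcongr; norm_num)
  set q := a + (√l)⁻¹
  have haq : a < q := by linarith
  have hsub : Set.Icc q b ⊆ Set.Icc a b := Set.Icc_subset_Icc_left haq.le
  have hfar : ‖∫ x in q..b, cexp (φ x * I)‖ ≤ 3 / √l := by
    refine norm_integral_cexp_le_of_le_deriv hb hs (fun x hx ↦ hφ x (hsub hx))
      (fun x hx ↦ hφ' x (hsub hx)) (hcont.mono hsub) (fun x hx ↦ hnonneg x (hsub hx)) fun x hx ↦ ?_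
    calc √l = l * (√l)⁻¹ := by rw [← div_eq_mul_inv, Real.div_sqrt]
      _ ≤ l * (x - a) := mul_le_mul_of_nonneg_left (by linarith [hx.1]) hl.le
      _ ≤ φ' x := hle x ⟨haq.trans_le hx.1, hx.2⟩
  have hφc : ContinuousOn φ (Set.Icc a b) := fun x hx ↦ (hφ x hx).continuousAt.continuousWithinAt
  have hint : ContinuousOn (fun x ↦ cexp (φ x * I)) (Set.Icc a b) := by fun_prop
  rw [← intervalIntegral.integral_add_adjacent_intervals
    ((hint.mono (Set.Icc_subset_Icc_right hb)).intervalIntegrable_of_Icc haq.le)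
    ((hint.mono hsub).intervalIntegrable_of_Icc hb)]
  refine (norm_add_le _ _).trans ((add_le_add (hnear haq.le (by linarith)) hfar).trans_eq ?_)
  ring

lemma norm_integral_cexp_le_of_deriv_le_neg_mul_sub {l : ℝ} (hab : a ≤ b) (hl : 0 < l)
    (hφ : ∀ x ∈ Set.Icc a b, HasDerivAt φ (φ' x) x)
    (hφ' : ∀ x ∈ Set.Icc a b, HasDerivAt φ' (φ'' x) x)
    (hcont : ContinuousOn φ'' (Set.Icc a b)) (hnonneg : ∀ x ∈ Set.Icc a b, 0 ≤ φ'' x)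
    (hle : ∀ x ∈ Set.Ico a b, φ' x ≤ -(l * (b - x))) :
    ‖∫ x in a..b, cexp (φ x * I)‖ ≤ 4 / √l := by
  have hmem : ∀ x ∈ Set.Icc (-b) (-a), -x ∈ Set.Icc a b :=
    fun x hx ↦ ⟨by linarith [hx.2], by linarith [hx.1]⟩
  have hreflect := norm_integral_cexp_le_of_mul_sub_le_deriv (φ := fun x ↦ φ (-x))
    (φ' := fun x ↦ -φ' (-x)) (φ'' := fun x ↦ φ'' (-x)) (neg_le_neg hab) hl
    (fun x hx ↦ ((hφ _ (hmem x hx)).comp x (hasDerivAt_neg x)).congr_deriv (by ring))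
    (fun x hx ↦ ((hφ' _ (hmem x hx)).comp x (hasDerivAt_neg x)).neg.congr_deriv (by ring))
    (hcont.comp continuous_neg.continuousOn hmem) (fun x hx ↦ hnonneg _ (hmem x hx))
    (fun x hx ↦ by linarith [hle (-x) ⟨by linarith [hx.2], by linarith [hx.1]⟩])
  rwa [intervalIntegral.integral_comp_neg (fun x ↦ cexp (φ x * I)), neg_neg, neg_neg] at hreflect

lemma exists_le_neg_and_le_of_le_deriv {g g' : ℝ → ℝ} {l : ℝ} (hab : a ≤ b)
    (hg : ∀ x ∈ Set.Icc a b, HasDerivAt g (g' x) x) (hl : ∀ x ∈ Set.Icc a b, l ≤ g' x) :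
    ∃ c ∈ Set.Icc a b, (∀ x ∈ Set.Icc a b, x < c → g x ≤ -(l * (c - x))) ∧
      ∀ x ∈ Set.Icc a b, c < x → l * (x - c) ≤ g x := by
  have hgc : ContinuousOn g (Set.Icc a b) := fun x hx ↦ (hg x hx).continuousAt.continuousWithinAt
  have hmono : MonotoneOn (fun x ↦ g x - l * x) (Set.Icc a b) := by
    refine monotoneOn_of_hasDerivWithinAt_nonneg (convex_Icc a b) (f' := fun x ↦ g' x - l)
      (by fun_prop) (fun x hx ↦ ?_) fun x hx ↦ sub_nonneg.2 (hl x (interior_subset hx))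
    exact (((hg x (interior_subset hx)).sub ((hasDerivAt_id x).const_mul l)).congr_deriv
      (by simp)).hasDerivWithinAt
  obtain ⟨c, hc, hcb, hac⟩ : ∃ c ∈ Set.Icc a b, (c < b → 0 ≤ g c) ∧ (a < c → g c ≤ 0) := by
    by_cases ha : 0 ≤ g a
    · exact ⟨a, ⟨le_rfl, hab⟩, fun _ ↦ ha, fun h ↦ absurd h (lt_irrefl _)⟩
    by_cases hb : g b ≤ 0
    · exact ⟨b, ⟨hab, le_rfl⟩, fun h ↦ absurd h (lt_irrefl _), fun _ ↦ hb⟩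
    obtain ⟨c, hc, h0⟩ := intermediate_value_Icc hab hgc ⟨(not_le.1 ha).le, (not_le.1 hb).le⟩
    exact ⟨c, hc, fun _ ↦ h0.ge, fun _ ↦ h0.le⟩
  refine ⟨c, hc, fun x hx hxc ↦ ?_, fun x hx hcx ↦ ?_⟩
  · linarith [hmono hx hc hxc.le, hac (hx.1.trans_lt hxc)]
  · linarith [hmono hc hx hcx.le, hcb (hcx.trans_le hx.2)]

lemma norm_integral_cexp_le_of_le_deriv2 {l : ℝ} (hab : a ≤ b) (hl : 0 < l)
    (hφ : ∀ x ∈ Set.Icc a b, HasDerivAt φ (φ' x) x)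
    (hφ' : ∀ x ∈ Set.Icc a b, HasDerivAt φ' (φ'' x) x)
    (hcont : ContinuousOn φ'' (Set.Icc a b)) (hle : ∀ x ∈ Set.Icc a b, l ≤ φ'' x) :
    ‖∫ x in a..b, cexp (φ x * I)‖ ≤ 8 / √l := by
  obtain ⟨c, hc, hleft, hright⟩ := exists_le_neg_and_le_of_le_deriv hab hφ' hle
  have hsub_left : Set.Icc a c ⊆ Set.Icc a b := Set.Icc_subset_Icc_right hc.2
  have hsub_right : Set.Icc c b ⊆ Set.Icc a b := Set.Icc_subset_Icc_left hc.1
  have hbound_left := norm_integral_cexp_le_of_deriv_le_neg_mul_sub hc.1 hl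
    (fun x hx ↦ hφ x (hsub_left hx)) (fun x hx ↦ hφ' x (hsub_left hx)) (hcont.mono hsub_left)
    (fun x hx ↦ hl.le.trans (hle x (hsub_left hx)))
    fun x hx ↦ hleft x (hsub_left ⟨hx.1, hx.2.le⟩) hx.2
  have hbound_right := norm_integral_cexp_le_of_mul_sub_le_deriv hc.2 hl
    (fun x hx ↦ hφ x (hsub_right hx)) (fun x hx ↦ hφ' x (hsub_right hx)) (hcont.mono hsub_right)
    (fun x hx ↦ hl.le.trans (hle x (hsub_right hx)))
    fun x hx ↦ hright x (hsub_right ⟨hx.1.le, hx.2⟩) hx.1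
  have hφc : ContinuousOn φ (Set.Icc a b) := fun x hx ↦ (hφ x hx).continuousAt.continuousWithinAt
  have hint : ContinuousOn (fun x ↦ cexp (φ x * I)) (Set.Icc a b) := by fun_prop
  rw [← intervalIntegral.integral_add_adjacent_intervals
    ((hint.mono hsub_left).intervalIntegrable_of_Icc hc.1)
    ((hint.mono hsub_right).intervalIntegrable_of_Icc hc.2)]
  refine (norm_add_le _ _).trans ((add_le_add hbound_left hbound_right).trans_eq ?_)
  ring

lemma norm_integral_cexp_le_of_deriv2_le_neg {l : ℝ} (hab : a ≤ b) (hl : 0 < l)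
    (hφ : ∀ x ∈ Set.Icc a b, HasDerivAt φ (φ' x) x)
    (hφ' : ∀ x ∈ Set.Icc a b, HasDerivAt φ' (φ'' x) x)
    (hcont : ContinuousOn φ'' (Set.Icc a b)) (hle : ∀ x ∈ Set.Icc a b, φ'' x ≤ -l) :
    ‖∫ x in a..b, cexp (φ x * I)‖ ≤ 8 / √l := by
  have hneg := norm_integral_cexp_le_of_le_deriv2 (φ := fun x ↦ -φ x) (φ' := fun x ↦ -φ' x)
    (φ'' := fun x ↦ -φ'' x) hab hl (fun x hx ↦ (hφ x hx).neg) (fun x hx ↦ (hφ' x hx).neg) hcont.neg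
    (fun x hx ↦ le_neg_of_le_neg (hle x hx))
  have hconj : ∀ x, cexp ((-φ x : ℝ) * I) = (starRingEnd ℂ) (cexp (φ x * I)) := fun x ↦ by
    rw [← exp_conj]; simp
  simp_rw [hconj] at hneg
  rwa [intervalIntegral.intervalIntegral_conj, RCLike.norm_conj] at hneg

end VanDerCorput

section WaveFrequency

open Real

lemma hasDerivAt_tanh (y : ℝ) : HasDerivAt tanh (1 - tanh y ^ 2) y := by
  have hquot := (hasDerivAt_sinh y).div (hasDerivAt_cosh y) (cosh_pos y).ne'
  rw [show tanh = fun y ↦ sinh y / cosh y from funext tanh_eq_sinh_div_cosh]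
  refine hquot.congr_deriv ?_
  have := (cosh_pos y).ne'
  field_simp

lemma continuous_tanh : Continuous tanh :=
  continuous_iff_continuousAt.2 fun y ↦ (hasDerivAt_tanh y).continuousAt

lemma one_sub_tanh_sq (y : ℝ) : 1 - tanh y ^ 2 = 1 / cosh y ^ 2 := by
  have := (cosh_pos y).ne'
  rw [tanh_eq_sinh_div_cosh]
  field_simp
  rw [cosh_sq]
  ring

lemma tanh_pos {y : ℝ} (hy : 0 < y) : 0 < tanh y := by
  rw [tanh_eq_sinh_div_cosh]
  exact div_pos (sinh_pos_iff.2 hy) (cosh_pos y)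

lemma tanh_le_self {y : ℝ} (hy : 0 ≤ y) : tanh y ≤ y := by
  have hderiv : ∀ x, HasDerivAt (fun y ↦ y - tanh y) (tanh x ^ 2) x := fun x ↦
    ((hasDerivAt_id x).sub (hasDerivAt_tanh x)).congr_deriv (by ring)
  simpa using monotone_of_hasDerivAt_nonneg hderiv (fun x ↦ sq_nonneg (tanh x)) hy

lemma one_add_sq_div_two_le_cosh (y : ℝ) : 1 + y ^ 2 / 2 ≤ cosh y := by
  have hcosh : cosh y = 1 + 2 * sinh (y / 2) ^ 2 := by
    rw [← mul_div_cancel₀ y (two_ne_zero' ℝ), cosh_two_mul, cosh_sq, mul_div_cancel₀ y two_ne_zero]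
    ring
  have hsinh : (y / 2) ^ 2 ≤ sinh (y / 2) ^ 2 := by
    rw [← sq_abs, ← sq_abs (sinh _), abs_sinh]
    exact pow_le_pow_left₀ (abs_nonneg _) (self_le_sinh_iff.2 (abs_nonneg _)) 2
  rw [hcosh]
  linarith

/-- The water-wave frequency `√(y tanh y)` at depth one, of which `dispersion` is a rescaling. -/
def waveFreq (y : ℝ) : ℝ := √(y * tanh y)

/-- The derivative of `waveFreq` on `(0, ∞)`. -/
def waveFreqDeriv (y : ℝ) : ℝ := (tanh y + y * (1 - tanh y ^ 2)) / (2 * √(y * tanh y))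

/-- The second derivative of `waveFreq` on `(0, ∞)`, arranged as minus a sum of two nonnegative
terms over a positive denominator. -/
def waveFreqDeriv2 (y : ℝ) : ℝ :=
  -((tanh y - y * (1 - tanh y ^ 2)) ^ 2 + 4 * y ^ 2 * (1 - tanh y ^ 2) * tanh y ^ 2) /
    (4 * (y * tanh y) * √(y * tanh y))

lemma hasDerivAt_waveFreq {y : ℝ} (hy : 0 < y) : HasDerivAt waveFreq (waveFreqDeriv y) y :=
  (((hasDerivAt_id y).mul (hasDerivAt_tanh y)).congr_deriv (by simp)).sqrt
    (mul_pos hy (tanh_pos hy)).ne'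

lemma hasDerivAt_waveFreqDeriv {y : ℝ} (hy : 0 < y) :
    HasDerivAt waveFreqDeriv (waveFreqDeriv2 y) y := by
  have hpos : 0 < y * tanh y := mul_pos hy (tanh_pos hy)
  have hsqrt : 0 < √(y * tanh y) := sqrt_pos.2 hpos
  have hsq : √(y * tanh y) ^ 2 = y * tanh y := sq_sqrt hpos.le
  have htanh := hasDerivAt_tanh y
  have hnum : HasDerivAt (fun y ↦ tanh y + y * (1 - tanh y ^ 2))
      (2 * (1 - tanh y ^ 2) * (1 - y * tanh y)) y :=
    (htanh.add ((hasDerivAt_id y).mul ((hasDerivAt_const y 1).sub (htanh.pow 2)))).congr_deriv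
      (by simp; ring)
  have hden : HasDerivAt (fun y ↦ 2 * √(y * tanh y)) (2 * waveFreqDeriv y) y :=
    (hasDerivAt_waveFreq hy).const_mul 2
  refine (hnum.div hden (by positivity)).congr_deriv ?_
  unfold waveFreqDeriv waveFreqDeriv2
  generalize √(y * tanh y) = s at hsq hsqrt
  generalize tanh y = τ at hsq
  rw [← hsq]
  field_simp
  rw [hsq]
  ring

lemma continuousOn_waveFreqDeriv2 : ContinuousOn waveFreqDeriv2 (Set.Ioi 0) := by
  have := continuous_tanh
  refine ContinuousOn.div (by fun_prop) (by fun_prop) fun y hy ↦ ?_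
  have hpos : 0 < y * tanh y := mul_pos hy (tanh_pos hy)
  have := sqrt_pos.2 hpos
  positivity

lemma waveFreqDeriv2_le_of_le_one {y : ℝ} (hy : 0 < y) (hy1 : y ≤ 1) :
    waveFreqDeriv2 y ≤ -(y / 16) := by
  have htanh := tanh_pos hy
  have hpos : 0 < y * tanh y := mul_pos hy htanh
  have := sqrt_pos.2 hpos
  have hcosh_pos := cosh_pos y
  have hcosh : cosh y ≤ 2 := by
    have hexp : exp (1 / 2) * exp (1 / 2) = exp 1 := by rw [← exp_add]; norm_num
    have hmono : exp (y ^ 2 / 2) ≤ exp (1 / 2) := exp_le_exp.2 (by nlinarith)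
    nlinarith [cosh_le_exp_half_sq y, exp_one_lt_d9, exp_pos (1 / 2)]
  have hsech : 1 / 4 ≤ 1 - tanh y ^ 2 := by
    rw [one_sub_tanh_sq, div_le_div_iff₀ (by norm_num) (by positivity)]
    nlinarith
  have hhalf : y / 2 ≤ tanh y := by
    rw [tanh_eq_sinh_div_cosh, div_le_div_iff₀ (by norm_num) hcosh_pos]
    nlinarith [self_le_sinh_iff.2 hy.le]
  have hle : y * tanh y ≤ y ^ 2 := by nlinarith [tanh_le_self hy.le]
  have hsqrt_le : √(y * tanh y) ≤ y := (sqrt_le_left hy.le).2 hle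
  unfold waveFreqDeriv2
  rw [neg_div, neg_le_neg_iff, le_div_iff₀ (by positivity)]
  calc y / 16 * (4 * (y * tanh y) * √(y * tanh y))
      ≤ y / 16 * (4 * y ^ 2 * y) := by gcongr
    _ = 4 * y ^ 2 * (1 / 4) * (y / 2) ^ 2 := by ring
    _ ≤ 4 * y ^ 2 * (1 - tanh y ^ 2) * tanh y ^ 2 := by gcongr
    _ ≤ _ := le_add_of_nonneg_left (sq_nonneg _)

lemma waveFreqDeriv2_le_of_one_le {y : ℝ} (hy : 1 ≤ y) :
    waveFreqDeriv2 y ≤ -(1 / (64 * (y * √y))) := by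
  have hy0 : 0 < y := by linarith
  have htanh := tanh_pos hy0
  have hpos : 0 < y * tanh y := mul_pos hy0 htanh
  have := sqrt_pos.2 hpos
  have := sqrt_pos.2 hy0
  have hcosh_pos := cosh_pos y
  have hcosh := one_add_sq_div_two_le_cosh y
  have hcosh_ge : 3 / 2 ≤ cosh y := by nlinarith
  have hsech_nonneg : 0 ≤ 1 - tanh y ^ 2 := by rw [one_sub_tanh_sq]; positivity
  have hsech : 1 - tanh y ^ 2 ≤ 4 / 9 := by
    rw [one_sub_tanh_sq, div_le_div_iff₀ (by positivity) (by norm_num)]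
    nlinarith
  have htanh_ge : 0.74 ≤ tanh y := by nlinarith
  have hy_sech : y * (1 - tanh y ^ 2) ≤ 0.48 := by
    have : 1.4 * y ≤ cosh y := by nlinarith [sq_nonneg (y - 1.4)]
    rw [one_sub_tanh_sq, mul_one_div, div_le_iff₀ (by positivity)]
    nlinarith
  have hle : y * tanh y ≤ y := by nlinarith [tanh_lt_one y]
  unfold waveFreqDeriv2
  rw [neg_div, neg_le_neg_iff, le_div_iff₀ (by positivity)]
  calc 1 / (64 * (y * √y)) * (4 * (y * tanh y) * √(y * tanh y))
      ≤ 1 / (64 * (y * √y)) * (4 * y * √y) := by gcongr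
    _ = 1 / 16 := by field_simp; norm_num
    _ ≤ (tanh y - y * (1 - tanh y ^ 2)) ^ 2 := by nlinarith
    _ ≤ _ := le_add_of_nonneg_right (by positivity)

end WaveFrequency

section Dispersion

variable {μ N ξ : ℝ}

/-- The dispersion relation `ω_μ(ξ) = ξ √T_μ(ξ)` of the linear Whitham equation. -/
def dispersion (μ ξ : ℝ) : ℝ := ξ * √(Tsymb μ ξ)

/-- The size, up to constants, of the curvature `|ω_μ''| / μ` on frequencies of size `N`: linear at
low frequencies and of order `N ^ (-3/2)` at high ones. -/
def curvatureSize (N : ℝ) : ℝ := min N (1 / (N * √N))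

/-- The frequency shell `N ≤ |ξ| < 2N`. -/
def dyadicShell (N : ℝ) : Set ℝ := {ξ | N ≤ |ξ| ∧ |ξ| < 2 * N}

/-- The space-time plane wave `exp (2πi (xξ - t ω_μ(ξ)))`, with the normalization of `𝓕`. -/
def planeWave (μ x t ξ : ℝ) : ℂ :=
  Complex.exp (((2 * Real.pi * (x * ξ - t * dispersion μ ξ) : ℝ) : ℂ) * Complex.I)

lemma curvatureSize_pos (hN : 0 < N) : 0 < curvatureSize N := by
  have := Real.sqrt_pos.2 hN
  unfold curvatureSize
  positivity

lemma Tsymb_neg (μ ξ : ℝ) : Tsymb μ (-ξ) = Tsymb μ ξ := by simp [Tsymb]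

lemma dispersion_neg (μ ξ : ℝ) : dispersion μ (-ξ) = -dispersion μ ξ := by
  rw [dispersion, Tsymb_neg, neg_mul, dispersion]

lemma continuous_Tsymb (hμ : 0 < μ) : Continuous (Tsymb μ) := by
  have hsqrt : √μ ≠ 0 := (Real.sqrt_pos.2 hμ).ne'
  have hslope : Continuous (dslope Real.tanh 0) := continuous_iff_continuousAt.2 fun y ↦ by
    rcases eq_or_ne y 0 with rfl | hy
    · exact continuousAt_dslope_same.2 (hasDerivAt_tanh 0).differentiableAt
    · exact (continuousAt_dslope_of_ne hy).2 continuous_tanh.continuousAt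
  suffices Tsymb μ = fun ξ ↦ dslope Real.tanh 0 (√μ * |ξ|) by
    rw [this]
    fun_prop
  ext ξ
  rcases eq_or_ne ξ 0 with rfl | hξ
  · simp [Tsymb, (hasDerivAt_tanh 0).deriv]
  · rw [dslope_of_ne _ (mul_ne_zero hsqrt (abs_ne_zero.2 hξ))]
    simp [Tsymb, hξ, slope, div_eq_inv_mul]

lemma continuous_dispersion (hμ : 0 < μ) : Continuous (dispersion μ) :=
  continuous_id.mul (continuous_Tsymb hμ).sqrt

lemma continuous_planeWave (hμ : 0 < μ) (x t : ℝ) : Continuous (planeWave μ x t) := by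
  have := continuous_dispersion hμ
  unfold planeWave
  fun_prop

lemma norm_planeWave (μ x t ξ : ℝ) : ‖planeWave μ x t ξ‖ = 1 := Complex.norm_exp_ofReal_mul_I _

lemma planeWave_neg (μ x t ξ : ℝ) : planeWave μ x t (-ξ) = planeWave μ (-x) (-t) ξ := by
  rw [planeWave, planeWave, dispersion_neg]
  congr 3
  ring

lemma dispersion_eq_waveFreq (hμ : 0 < μ) (hξ : 0 < ξ) :
    dispersion μ ξ = (√μ)⁻¹ * waveFreq (√μ * ξ) := by
  have := Real.sqrt_pos.2 hμ
  have hy : 0 < √μ * ξ := by positivity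
  have hfactor : (√μ * ξ) * Real.tanh (√μ * ξ) =
      (√μ * ξ) ^ 2 * (Real.tanh (√μ * ξ) / (√μ * ξ)) := by field_simp
  rw [dispersion, Tsymb, if_neg hξ.ne', abs_of_pos hξ, waveFreq, hfactor,
    Real.sqrt_mul (by positivity), Real.sqrt_sq hy.le]
  field_simp

lemma hasDerivAt_dispersion (hμ : 0 < μ) (hξ : 0 < ξ) :
    HasDerivAt (dispersion μ) (waveFreqDeriv (√μ * ξ)) ξ := by
  have hsqrt : 0 < √μ := Real.sqrt_pos.2 hμ
  have hscale : HasDerivAt (fun ξ ↦ √μ * ξ) (√μ) ξ := by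
    simpa using (hasDerivAt_id ξ).const_mul √μ
  have hrescaled : HasDerivAt (fun ξ ↦ (√μ)⁻¹ * waveFreq (√μ * ξ)) (waveFreqDeriv (√μ * ξ)) ξ :=
    (((hasDerivAt_waveFreq (mul_pos hsqrt hξ)).comp ξ hscale).const_mul _).congr_deriv
      (by field_simp)
  refine hrescaled.congr_of_eventuallyEq ?_
  filter_upwards [lt_mem_nhds hξ] with z hz using dispersion_eq_waveFreq hμ hz

lemma hasDerivAt_waveFreqDeriv_mul (hμ : 0 < μ) (hξ : 0 < ξ) :
    HasDerivAt (fun ξ ↦ waveFreqDeriv (√μ * ξ)) (√μ * waveFreqDeriv2 (√μ * ξ)) ξ := by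
  have hscale : HasDerivAt (fun ξ ↦ √μ * ξ) (√μ) ξ := by
    simpa using (hasDerivAt_id ξ).const_mul √μ
  exact ((hasDerivAt_waveFreqDeriv (mul_pos (Real.sqrt_pos.2 hμ) hξ)).comp ξ hscale).congr_deriv
    (mul_comm _ _)

lemma curvature_le (hμ : 0 < μ) (hμ1 : μ ≤ 1) (hN : 0 < N) (hle : N ≤ ξ) (hge : ξ ≤ 2 * N) :
    √μ * waveFreqDeriv2 (√μ * ξ) ≤ -(1 / 256 * (μ * curvatureSize N)) := by
  have hsqrt : 0 < √μ := Real.sqrt_pos.2 hμ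
  have hsqrt1 : √μ ≤ 1 := Real.sqrt_le_one.2 hμ1
  have hξ : 0 < ξ := hN.trans_le hle
  have hcurv := curvatureSize_pos hN
  have hy : 0 < √μ * ξ := by positivity
  suffices waveFreqDeriv2 (√μ * ξ) ≤ -(1 / 256 * (√μ * curvatureSize N)) by
    refine (mul_le_mul_of_nonneg_left this hsqrt.le).trans_eq ?_
    linear_combination (-(1 / 256) * curvatureSize N) * Real.mul_self_sqrt hμ.le
  rcases le_total (√μ * ξ) 1 with h1 | h1
  · refine (waveFreqDeriv2_le_of_le_one hy h1).trans (neg_le_neg ?_)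
    have : √μ * curvatureSize N ≤ √μ * ξ := by
      gcongr
      exact (min_le_left _ _).trans hle
    nlinarith
  · refine (waveFreqDeriv2_le_of_one_le h1).trans (neg_le_neg ?_)
    have := Real.sqrt_pos.2 hN
    have hy_le : √μ * ξ ≤ 2 * N := by nlinarith
    have hsqrt_le : √(√μ * ξ) ≤ 2 * √N := Real.sqrt_le_iff.2
      ⟨by positivity, by rw [mul_pow, Real.sq_sqrt hN.le]; linarith⟩
    calc 1 / 256 * (√μ * curvatureSize N) ≤ 1 / 256 * (1 * (1 / (N * √N))) := by
          gcongr
          exact min_le_right _ _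
      _ = 1 / (64 * (2 * N * (2 * √N))) := by field_simp; norm_num
      _ ≤ 1 / (64 * (√μ * ξ * √(√μ * ξ))) := by gcongr

lemma continuousOn_waveFreqDeriv2_mul (hμ : 0 < μ) :
    ContinuousOn (fun ξ ↦ waveFreqDeriv2 (√μ * ξ)) (Set.Ioi 0) :=
  continuousOn_waveFreqDeriv2.comp (by fun_prop) fun _ hξ ↦ mul_pos (Real.sqrt_pos.2 hμ) hξ

lemma norm_integral_planeWave_le (x : ℝ) {t : ℝ} (hμ : 0 < μ) (hμ1 : μ ≤ 1) (hN : 0 < N)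
    (ht : t ≠ 0) :
    ‖∫ ξ in N..(2 * N), planeWave μ x t ξ‖ ≤ 64 / √(|t| * (μ * curvatureSize N)) := by
  have hcurv := curvatureSize_pos hN
  have ht' : 0 < |t| := abs_pos.2 ht
  have hl : 0 < |t| * (μ * curvatureSize N) / 8 ^ 2 := by positivity
  have hconst : 8 / √(|t| * (μ * curvatureSize N) / 8 ^ 2) =
      64 / √(|t| * (μ * curvatureSize N)) := by
    rw [Real.sqrt_div (by positivity), Real.sqrt_sq (by norm_num), div_div_eq_mul_div]
    norm_num
  have hpos : ∀ ξ ∈ Set.Icc N (2 * N), 0 < ξ := fun ξ hξ ↦ hN.trans_le hξ.1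
  have hderiv : ∀ ξ ∈ Set.Icc N (2 * N),
      HasDerivAt (fun ξ ↦ 2 * Real.pi * (x * ξ - t * dispersion μ ξ))
        (2 * Real.pi * (x - t * waveFreqDeriv (√μ * ξ))) ξ := fun ξ hξ ↦
    ((((hasDerivAt_id ξ).const_mul x).sub ((hasDerivAt_dispersion hμ (hpos ξ hξ)).const_mul
      t)).const_mul (2 * Real.pi)).congr_deriv (by ring)
  have hderiv2 : ∀ ξ ∈ Set.Icc N (2 * N),
      HasDerivAt (fun ξ ↦ 2 * Real.pi * (x - t * waveFreqDeriv (√μ * ξ)))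
        (2 * Real.pi * (-t * (√μ * waveFreqDeriv2 (√μ * ξ)))) ξ := fun ξ hξ ↦
    (((hasDerivAt_const ξ x).sub ((hasDerivAt_waveFreqDeriv_mul hμ (hpos ξ hξ)).const_mul
      t)).const_mul (2 * Real.pi)).congr_deriv (by ring)
  have hcont : ContinuousOn (fun ξ ↦ 2 * Real.pi * (-t * (√μ * waveFreqDeriv2 (√μ * ξ))))
      (Set.Icc N (2 * N)) := by
    have := (continuousOn_waveFreqDeriv2_mul hμ).mono hpos
    fun_prop
  have hlower : ∀ ξ ∈ Set.Icc N (2 * N), |t| * (μ * curvatureSize N) / 8 ^ 2 ≤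
      2 * Real.pi * (|t| * -(√μ * waveFreqDeriv2 (√μ * ξ))) := fun ξ hξ ↦ by
    have hcurv_t := mul_le_mul_of_nonneg_left
      (le_neg_of_le_neg (curvature_le hμ hμ1 hN hξ.1 hξ.2)) ht'.le
    have : 0 < |t| * (1 / 256 * (μ * curvatureSize N)) := by positivity
    nlinarith [Real.pi_gt_three]
  rw [← hconst]
  rcases lt_or_gt_of_ne ht with h | h
  · refine norm_integral_cexp_le_of_deriv2_le_neg (by linarith) hl hderiv hderiv2 hcont
      fun ξ hξ ↦ ?_
    have := hlower ξ hξ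
    rw [abs_of_neg h] at this ⊢
    linarith
  · refine norm_integral_cexp_le_of_le_deriv2 (by linarith) hl hderiv hderiv2 hcont fun ξ hξ ↦ ?_
    have := hlower ξ hξ
    rw [abs_of_pos h] at this ⊢
    linarith

lemma measurableSet_dyadicShell (N : ℝ) : MeasurableSet (dyadicShell N) :=
  (measurableSet_le measurable_const continuous_abs.measurable).inter
    (measurableSet_lt continuous_abs.measurable measurable_const)

lemma dyadicShell_eq_union (hN : 0 < N) :
    dyadicShell N = Set.Ico N (2 * N) ∪ Set.Ioc (-(2 * N)) (-N) := by
  ext ξ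
  simp only [dyadicShell, Set.mem_ofPred_eq, Set.mem_union, Set.mem_Ico, Set.mem_Ioc]
  grind

lemma norm_setIntegral_dyadicShell_planeWave_le (x : ℝ) {t : ℝ} (hμ : 0 < μ) (hμ1 : μ ≤ 1)
    (hN : 0 < N) (ht : t ≠ 0) :
    ‖∫ ξ in dyadicShell N, planeWave μ x t ξ‖ ≤ 128 / √(|t| * (μ * curvatureSize N)) := by
  have hcont := continuous_planeWave hμ x t
  have hpos : ∫ ξ in Set.Ico N (2 * N), planeWave μ x t ξ =
      ∫ ξ in N..(2 * N), planeWave μ x t ξ := by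
    rw [intervalIntegral.integral_of_le (by linarith), integral_Ico_eq_integral_Ioc]
  have hneg : ∫ ξ in Set.Ioc (-(2 * N)) (-N), planeWave μ x t ξ =
      ∫ ξ in N..(2 * N), planeWave μ (-x) (-t) ξ := by
    rw [← intervalIntegral.integral_of_le (by linarith),
      ← intervalIntegral.integral_comp_neg (planeWave μ x t)]
    exact intervalIntegral.integral_congr fun ξ _ ↦ planeWave_neg μ x t ξ
  rw [dyadicShell_eq_union hN, setIntegral_union
    (Set.disjoint_left.2 fun ξ h h' ↦ by linarith [h.1, h'.2]) measurableSet_Ioc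
    (hcont.integrableOn_Icc.mono_set Set.Ico_subset_Icc_self)
    (hcont.integrableOn_Icc.mono_set Set.Ioc_subset_Icc_self), hpos, hneg]
  have hright := norm_integral_planeWave_le x hμ hμ1 hN ht
  have hleft := norm_integral_planeWave_le (-x) hμ hμ1 hN (neg_ne_zero.2 ht)
  rw [abs_neg] at hleft
  exact (norm_add_le _ _).trans ((add_le_add hright hleft).trans_eq (by ring))

end Dispersion

section TTStar

open ComplexConjugate

variable {α β : Type*} [MeasurableSpace α] [MeasurableSpace β] {μ : Measure α} {ν : Measure β}

lemma lintegral_mul_le_sqrt_mul_sqrt {f g : α → ℝ≥0∞} (hf : AEMeasurable f μ)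
    (hg : AEMeasurable g μ) :
    ∫⁻ a, f a * g a ∂μ ≤
      (∫⁻ a, f a ^ 2 ∂μ) ^ ((1 : ℝ) / 2) * (∫⁻ a, g a ^ 2 ∂μ) ^ ((1 : ℝ) / 2) := by
  simpa using ENNReal.lintegral_mul_le_Lp_mul_Lq μ Real.HolderConjugate.two_two hf hg

lemma rpow_half_sq (X : ℝ≥0∞) : (X ^ ((1 : ℝ) / 2)) ^ 2 = X := by
  rw [← ENNReal.rpow_mul_natCast]
  norm_num

lemma sq_lintegral_mul_le {f g : α → ℝ≥0∞} (hf : AEMeasurable f μ) (hg : AEMeasurable g μ) :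
    (∫⁻ a, f a * g a ∂μ) ^ 2 ≤ (∫⁻ a, f a ^ 2 ∂μ) * ∫⁻ a, g a ^ 2 ∂μ := by
  refine (pow_le_pow_left₀ zero_le (lintegral_mul_le_sqrt_mul_sqrt hf hg) 2).trans_eq ?_
  rw [mul_pow, rpow_half_sq, rpow_half_sq]

lemma le_mul_of_le_sqrt_mul_sqrt {X Y Z M : ℝ≥0∞} (hX : X ≠ ⊤)
    (hle : X ≤ Y ^ ((1 : ℝ) / 2) * Z ^ ((1 : ℝ) / 2)) (hZ : Z ≤ M * X) : X ≤ M * Y := by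
  rcases eq_or_ne X 0 with rfl | hX0
  · exact zero_le
  have hsq : X * X ≤ M * Y * X := calc
    X * X ≤ (Y ^ ((1 : ℝ) / 2) * Z ^ ((1 : ℝ) / 2)) ^ 2 := by rw [sq]; gcongr
    _ = Y * Z := by rw [mul_pow, rpow_half_sq, rpow_half_sq]
    _ ≤ Y * (M * X) := by gcongr
    _ = M * Y * X := by ring
  exact (ENNReal.mul_le_mul_iff_left hX0 hX).1 hsq

lemma lintegral_enorm_sq_eq [IsFiniteMeasure μ] {u : α → ℂ} (hu : Measurable u) {B : ℝ}
    (hB : ∀ t, ‖u t‖ ≤ B) : ∫⁻ t, ‖u t‖ₑ ^ 2 ∂μ = ‖∫ t, conj (u t) * u t ∂μ‖ₑ := by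
  have hint : Integrable (fun t ↦ ‖u t‖ ^ 2) μ :=
    .of_bound (by fun_prop) (B ^ 2) <| .of_forall fun t ↦ by
      rw [Real.norm_of_nonneg (by positivity)]
      exact pow_le_pow_left₀ (norm_nonneg _) (hB t) 2
  simp_rw [Complex.conj_mul', ← Complex.ofReal_pow]
  rw [integral_complex_ofReal, ← ofReal_norm, Complex.norm_real,
    Real.norm_of_nonneg (integral_nonneg fun t ↦ by positivity),
    ofReal_integral_eq_lintegral_ofReal hint (.of_forall fun t ↦ by positivity)]
  simp_rw [ENNReal.ofReal_pow (norm_nonneg _), ofReal_norm]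

lemma lintegral_lintegral_mul_le_of_symm [SFinite μ] {f : α → ℝ≥0∞} (hf : Measurable f)
    {K : α → α → ℝ≥0∞} (hK : Measurable (Function.uncurry K)) (hsymm : ∀ t s, K t s = K s t)
    {M : ℝ≥0∞} (hM : ∀ t, ∫⁻ s, K t s ∂μ ≤ M) :
    ∫⁻ z : α × α, f z.1 * f z.2 * K z.1 z.2 ∂(μ.prod μ) ≤ M * ∫⁻ t, f t ^ 2 ∂μ := by
  have hK' : Measurable fun z : α × α ↦ K z.1 z.2 := hK
  have hmeas : Measurable fun z : α × α ↦ f z.1 ^ 2 * K z.1 z.2 :=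
    ((hf.comp measurable_fst).pow_const 2).mul hK'
  have hfst : ∫⁻ z : α × α, f z.1 ^ 2 * K z.1 z.2 ∂(μ.prod μ) ≤ M * ∫⁻ t, f t ^ 2 ∂μ := by
    rw [lintegral_prod _ hmeas.aemeasurable, ← lintegral_const_mul _ (hf.pow_const 2)]
    refine lintegral_mono fun t ↦ ?_
    have hrow : Measurable (K t) := hK'.comp measurable_prodMk_left
    simp only
    rw [lintegral_const_mul _ hrow, mul_comm]
    gcongr
    exact hM t
  have hsnd : ∫⁻ z : α × α, f z.2 ^ 2 * K z.1 z.2 ∂(μ.prod μ) ≤ M * ∫⁻ t, f t ^ 2 ∂μ := by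
    rw [← lintegral_prod_swap] at hfst
    refine le_of_eq_of_le (lintegral_congr fun z ↦ ?_) hfst
    rw [hsymm, Prod.fst_swap, Prod.snd_swap]
  have hyoung : ∀ a b : ℝ≥0∞, a * b ≤ 2⁻¹ * a ^ 2 + 2⁻¹ * b ^ 2 := fun a b ↦ by
    simpa [ENNReal.div_eq_inv_mul] using ENNReal.young_inequality a b Real.HolderConjugate.two_two
  calc ∫⁻ z : α × α, f z.1 * f z.2 * K z.1 z.2 ∂(μ.prod μ)
      ≤ ∫⁻ z : α × α, 2⁻¹ * (f z.1 ^ 2 * K z.1 z.2) + 2⁻¹ * (f z.2 ^ 2 * K z.1 z.2)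
          ∂(μ.prod μ) := by
        refine lintegral_mono fun z ↦ ?_
        rw [← mul_assoc, ← mul_assoc, ← add_mul]
        gcongr
        exact hyoung _ _
    _ ≤ 2⁻¹ * (M * ∫⁻ t, f t ^ 2 ∂μ) + 2⁻¹ * (M * ∫⁻ t, f t ^ 2 ∂μ) := by
        rw [lintegral_add_left (hmeas.const_mul _), lintegral_const_mul' _ _ (by simp),
          lintegral_const_mul' _ _ (by simp)]
        gcongr
    _ = M * ∫⁻ t, f t ^ 2 ∂μ := by rw [← add_mul, ENNReal.inv_two_add_inv_two, one_mul]

variable [IsFiniteMeasure μ] [IsFiniteMeasure ν] {e : α → β → ℂ} {M : ℝ≥0∞}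

lemma integral_conj_mul_self_eq (he : Measurable (Function.uncurry e)) (he1 : ∀ t ξ, ‖e t ξ‖ ≤ 1)
    {u : α → ℂ} (hu : Measurable u) {B : ℝ} (hB : ∀ t, ‖u t‖ ≤ B) :
    ∫ ξ, conj (∫ t, conj (u t) * e t ξ ∂μ) * (∫ t, conj (u t) * e t ξ ∂μ) ∂ν =
      ∫ z : α × α, conj (u z.1) * u z.2 * ∫ ξ, e z.1 ξ * conj (e z.2 ξ) ∂ν ∂(μ.prod μ) := by
  have he' : Measurable fun p : α × β ↦ e p.1 p.2 := he
  have hprod : ∀ ξ, conj (∫ t, conj (u t) * e t ξ ∂μ) * (∫ t, conj (u t) * e t ξ ∂μ) =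
      ∫ z : α × α, (conj (u z.1) * e z.1 ξ) * (u z.2 * conj (e z.2 ξ)) ∂(μ.prod μ) := fun ξ ↦ by
    rw [integral_prod_mul (fun t ↦ conj (u t) * e t ξ) (fun s ↦ u s * conj (e s ξ)), mul_comm,
      ← integral_conj]
    simp
  have hint : Integrable (Function.uncurry fun (ξ : β) (z : α × α) ↦
      (conj (u z.1) * e z.1 ξ) * (u z.2 * conj (e z.2 ξ))) (ν.prod (μ.prod μ)) := by
    have : Measurable fun p : β × α × α ↦ e p.2.1 p.1 :=
      he'.comp ((measurable_fst.comp measurable_snd).prodMk measurable_fst)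
    have : Measurable fun p : β × α × α ↦ e p.2.2 p.1 :=
      he'.comp ((measurable_snd.comp measurable_snd).prodMk measurable_fst)
    refine .of_bound (C := (B * 1) * (B * 1)) ?_ (.of_forall fun p ↦ ?_)
    · exact (by fun_prop : Measurable fun p : β × α × α ↦
        (conj (u p.2.1) * e p.2.1 p.1) * (u p.2.2 * conj (e p.2.2 p.1))).aestronglyMeasurable
    · have hB0 : 0 ≤ B := (norm_nonneg _).trans (hB p.2.1)
      simp only [Function.uncurry, norm_mul, RCLike.norm_conj]
      gcongr <;> first | exact hB _ | exact he1 _ _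
  simp_rw [hprod]
  rw [integral_integral_swap hint]
  refine integral_congr_ae (.of_forall fun z ↦ ?_)
  simp only
  rw [← integral_const_mul]
  congr 1 with ξ
  ring

lemma lintegral_adjoint_sq_le (he : Measurable (Function.uncurry e)) (he1 : ∀ t ξ, ‖e t ξ‖ ≤ 1)
    (hM : ∀ t, ∫⁻ s, ‖∫ ξ, e t ξ * conj (e s ξ) ∂ν‖ₑ ∂μ ≤ M)
    {u : α → ℂ} (hu : Measurable u) {B : ℝ} (hB : ∀ t, ‖u t‖ ≤ B) :
    ∫⁻ ξ, ‖∫ t, conj (u t) * e t ξ ∂μ‖ₑ ^ 2 ∂ν ≤ M * ∫⁻ t, ‖u t‖ₑ ^ 2 ∂μ := by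
  have he' : Measurable fun p : α × β ↦ e p.1 p.2 := he
  have hW : Measurable fun ξ ↦ ∫ t, conj (u t) * e t ξ ∂μ :=
    ((by fun_prop : Measurable fun p : β × α ↦ conj (u p.2)).mul
      (he'.comp measurable_swap)).stronglyMeasurable.integral_prod_right.measurable
  have hWbound : ∀ ξ, ‖∫ t, conj (u t) * e t ξ ∂μ‖ ≤ B * μ.real Set.univ := fun ξ ↦ by
    refine norm_integral_le_of_norm_le_const (.of_forall fun t ↦ ?_)
    rw [norm_mul, RCLike.norm_conj]
    exact (mul_le_of_le_one_right (norm_nonneg _) (he1 t ξ)).trans (hB t)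
  have hK : Measurable fun z : α × α ↦ ∫ ξ, e z.1 ξ * conj (e z.2 ξ) ∂ν := by
    have : Measurable fun p : (α × α) × β ↦ e p.1.1 p.2 :=
      he'.comp ((measurable_fst.comp measurable_fst).prodMk measurable_snd)
    have : Measurable fun p : (α × α) × β ↦ e p.1.2 p.2 :=
      he'.comp ((measurable_snd.comp measurable_fst).prodMk measurable_snd)
    exact (by fun_prop : Measurable fun p : (α × α) × β ↦
      e p.1.1 p.2 * conj (e p.1.2 p.2)).stronglyMeasurable.integral_prod_right.measurable
  have hsymm : ∀ t s, ‖∫ ξ, e t ξ * conj (e s ξ) ∂ν‖ₑ = ‖∫ ξ, e s ξ * conj (e t ξ) ∂ν‖ₑ :=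
    fun t s ↦ by
      rw [← RCLike.enorm_conj, ← integral_conj]
      simp [mul_comm]
  rw [lintegral_enorm_sq_eq hW hWbound, integral_conj_mul_self_eq he he1 hu hB]
  refine (enorm_integral_le_lintegral_enorm _).trans ?_
  simp_rw [enorm_mul, RCLike.enorm_conj]
  exact lintegral_lintegral_mul_le_of_symm hu.enorm
    (K := fun t s ↦ ‖∫ ξ, e t ξ * conj (e s ξ) ∂ν‖ₑ) hK.enorm hsymm hM

/-- The `TT*` argument: an `L¹` bound on the rows of the kernel of `TT*` bounds `T` on `L²`. -/
lemma lintegral_enorm_integral_sq_le (he : Measurable (Function.uncurry e))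
    (he1 : ∀ t ξ, ‖e t ξ‖ ≤ 1) (hM : ∀ t, ∫⁻ s, ‖∫ ξ, e t ξ * conj (e s ξ) ∂ν‖ₑ ∂μ ≤ M)
    {f : β → ℂ} (hf : Measurable f) {B : ℝ} (hB : ∀ᵐ ξ ∂ν, ‖f ξ‖ ≤ B) :
    ∫⁻ t, ‖∫ ξ, e t ξ * f ξ ∂ν‖ₑ ^ 2 ∂μ ≤ M * ∫⁻ ξ, ‖f ξ‖ₑ ^ 2 ∂ν := by
  have he' : Measurable fun p : α × β ↦ e p.1 p.2 := he
  set u : α → ℂ := fun t ↦ ∫ ξ, e t ξ * f ξ ∂ν with hu_def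
  have hu : Measurable u :=
    (he'.mul (hf.comp measurable_snd)).stronglyMeasurable.integral_prod_right.measurable
  have hu_le : ∀ t, ‖u t‖ ≤ B * ν.real Set.univ := fun t ↦ by
    refine norm_integral_le_of_norm_le_const (hB.mono fun ξ hξ ↦ ?_)
    rw [norm_mul]
    exact (mul_le_of_le_one_left (norm_nonneg _) (he1 t ξ)).trans hξ
  have hW : Measurable fun ξ ↦ ∫ t, conj (u t) * e t ξ ∂μ :=
    ((by fun_prop : Measurable fun p : β × α ↦ conj (u p.2)).mul
      (he'.comp measurable_swap)).stronglyMeasurable.integral_prod_right.measurable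
  have hint : Integrable (Function.uncurry fun t ξ ↦ conj (u t) * (e t ξ * f ξ)) (μ.prod ν) := by
    refine .of_bound (C := B * ν.real Set.univ * (1 * B)) ?_
      ((Measure.quasiMeasurePreserving_snd.ae hB).mono fun p hp ↦ ?_)
    · exact (by fun_prop : Measurable fun p : α × β ↦
        conj (u p.1) * (e p.1 p.2 * f p.2)).aestronglyMeasurable
    · have hB0 : 0 ≤ B := (norm_nonneg _).trans hp
      simp only [Function.uncurry, norm_mul, RCLike.norm_conj]
      gcongr <;> first | exact hu_le _ | exact he1 _ _
  have hdual : ∫ t, conj (u t) * u t ∂μ = ∫ ξ, f ξ * ∫ t, conj (u t) * e t ξ ∂μ ∂ν := by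
    simp_rw [← integral_const_mul, mul_left_comm (f _) (conj _), mul_comm (f _) (e _ _)]
    rw [← integral_integral_swap hint]
    simp_rw [integral_const_mul, hu_def]
  have hsq := lintegral_enorm_sq_eq (μ := μ) hu hu_le
  refine le_mul_of_le_sqrt_mul_sqrt (hsq ▸ enorm_ne_top) ?_
    (lintegral_adjoint_sq_le he he1 hM hu hu_le)
  calc ∫⁻ t, ‖u t‖ₑ ^ 2 ∂μ ≤ ∫⁻ ξ, ‖f ξ‖ₑ * ‖∫ t, conj (u t) * e t ξ ∂μ‖ₑ ∂ν := by
        rw [hsq, hdual]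
        simpa only [enorm_mul] using enorm_integral_le_lintegral_enorm (μ := ν)
          fun ξ ↦ f ξ * ∫ t, conj (u t) * e t ξ ∂μ
    _ ≤ _ := lintegral_mul_le_sqrt_mul_sqrt hf.enorm.aemeasurable hW.enorm.aemeasurable

end TTStar

section LocalStrichartz

lemma lintegral_Ioc_inv_sqrt {τ : ℝ} (hτ : 0 ≤ τ) :
    ∫⁻ s in Set.Ioc 0 τ, ENNReal.ofReal (√|s|)⁻¹ = ENNReal.ofReal (2 * √τ) := by
  have hrpow : ∀ s ∈ Set.Ioc 0 τ,
      ENNReal.ofReal (√|s|)⁻¹ = ENNReal.ofReal (s ^ (-(1 / 2) : ℝ)) := fun s hs ↦ by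
    rw [abs_of_pos hs.1, Real.sqrt_eq_rpow, Real.rpow_neg hs.1.le]
  have hint : IntegrableOn (fun s : ℝ ↦ s ^ (-(1 / 2) : ℝ)) (Set.Ioc 0 τ) := by
    rw [← intervalIntegrable_iff_integrableOn_Ioc_of_le hτ]
    exact intervalIntegral.intervalIntegrable_rpow' (by norm_num)
  rw [setLIntegral_congr_fun measurableSet_Ioc hrpow, ← ofReal_integral_eq_lintegral_ofReal hint
    (ae_restrict_of_forall_mem measurableSet_Ioc fun s hs ↦ Real.rpow_nonneg hs.1.le _),
    ← intervalIntegral.integral_of_le hτ, integral_rpow (Or.inl (by norm_num)), Real.sqrt_eq_rpow]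
  congr 1
  norm_num
  ring

lemma lintegral_Ioc_neg_inv_sqrt_abs_le {τ : ℝ} (hτ : 0 ≤ τ) :
    ∫⁻ s in Set.Ioc (-τ) τ, ENNReal.ofReal (√|s|)⁻¹ ≤ ENNReal.ofReal (4 * √τ) := by
  have hneg : ∫⁻ s in Set.Ioc (-τ) 0, ENNReal.ofReal (√|s|)⁻¹ = ENNReal.ofReal (2 * √τ) := by
    rw [← lintegral_Ioc_inv_sqrt hτ, ← setLIntegral_congr (Ico_ae_eq_Ioc (a := 0) (b := τ)),
      ← (Measure.measurePreserving_neg volume).setLIntegral_comp_preimage_emb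
        (MeasurableEquiv.neg ℝ).measurableEmbedding]
    simp
  rw [← Set.Ioc_union_Ioc_eq_Ioc (neg_nonpos.2 hτ) hτ]
  refine (lintegral_union_le _ _ _).trans_eq ?_
  rw [hneg, lintegral_Ioc_inv_sqrt hτ, ← ENNReal.ofReal_add (by positivity) (by positivity)]
  ring_nf

lemma lintegral_Ioc_inv_sqrt_abs_sub_le {a b : ℝ} (hab : a < b) (t : ℝ) :
    ∫⁻ s in Set.Ioc a b, ENNReal.ofReal (√|t - s|)⁻¹ ≤ ENNReal.ofReal (5 * √(b - a)) := by
  set k : ℝ → ℝ≥0∞ := fun v ↦ ENNReal.ofReal (√|v|)⁻¹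
  set τ := b - a
  have hτ : 0 < τ := sub_pos.2 hab
  have hsqrt := Real.sqrt_pos.2 hτ
  have hsplit : ∀ s, k (t - s) ≤
      (Set.Ioc (-τ) τ).indicator k (t - s) + ENNReal.ofReal (√τ)⁻¹ := fun s ↦ by
    by_cases h : t - s ∈ Set.Ioc (-τ) τ
    · rw [Set.indicator_of_mem h]
      exact le_self_add
    · have hfar : τ ≤ |t - s| := not_lt.1 fun h' ↦ h ⟨(abs_lt.1 h').1, (abs_lt.1 h').2.le⟩
      rw [Set.indicator_of_notMem h, zero_add]
      exact ENNReal.ofReal_le_ofReal (inv_anti₀ hsqrt (Real.sqrt_le_sqrt hfar))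
  calc ∫⁻ s in Set.Ioc a b, k (t - s)
      ≤ ∫⁻ s in Set.Ioc a b, ((Set.Ioc (-τ) τ).indicator k (t - s) + ENNReal.ofReal (√τ)⁻¹) :=
        lintegral_mono hsplit
    _ = (∫⁻ s in Set.Ioc a b, (Set.Ioc (-τ) τ).indicator k (t - s)) + ENNReal.ofReal √τ := by
        rw [lintegral_add_right _ measurable_const, setLIntegral_const, Real.volume_Ioc,
          ← ENNReal.ofReal_mul (by positivity), inv_mul_eq_div, Real.div_sqrt]
    _ ≤ (∫⁻ s, (Set.Ioc (-τ) τ).indicator k (t - s)) + ENNReal.ofReal √τ := by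
        gcongr
        exact Measure.restrict_le_self
    _ ≤ ENNReal.ofReal (4 * √τ) + ENNReal.ofReal √τ := by
        rw [lintegral_sub_left_eq_self ((Set.Ioc (-τ) τ).indicator k),
          lintegral_indicator measurableSet_Ioc]
        gcongr
        exact lintegral_Ioc_neg_inv_sqrt_abs_le hτ.le
    _ = ENNReal.ofReal (5 * √τ) := by
        rw [← ENNReal.ofReal_add (by positivity) (by positivity)]
        ring_nf

open ComplexConjugate

lemma planeWave_mul_conj (μ x y s t ξ : ℝ) :
    planeWave μ x s ξ * conj (planeWave μ y t ξ) = planeWave μ (x - y) (s - t) ξ := by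
  unfold planeWave
  rw [← Complex.exp_conj, ← Complex.exp_add, map_mul, Complex.conj_ofReal, Complex.conj_I]
  congr 1
  push_cast
  ring

lemma planeWave_mul (μ x y s t ξ : ℝ) :
    planeWave μ x s ξ * planeWave μ y t ξ = planeWave μ (x + y) (s + t) ξ := by
  unfold planeWave
  rw [← Complex.exp_add]
  congr 1
  push_cast
  ring

lemma measurable_planeWave {α : Type*} [MeasurableSpace α] {μ : ℝ} (hμ : 0 < μ) {x t ξ : α → ℝ}
    (hx : Measurable x) (ht : Measurable t) (hξ : Measurable ξ) :
    Measurable fun p ↦ planeWave μ (x p) (t p) (ξ p) := by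
  have := (continuous_dispersion hμ).measurable
  unfold planeWave
  fun_prop

lemma dyadicShell_subset_Icc (N : ℝ) : dyadicShell N ⊆ Set.Icc (-(2 * N)) (2 * N) :=
  fun _ hξ ↦ abs_le.1 hξ.2.le

lemma integrableOn_dyadicShell_of_continuous {f : ℝ → ℂ} (hf : Continuous f) (N : ℝ) :
    IntegrableOn f (dyadicShell N) :=
  hf.integrableOn_Icc.mono_set (dyadicShell_subset_Icc N)

lemma isFiniteMeasure_restrict_dyadicShell (N : ℝ) :
    IsFiniteMeasure (volume.restrict (dyadicShell N)) :=
  isFiniteMeasure_restrict.2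
    ((measure_mono (dyadicShell_subset_Icc N)).trans_lt measure_Icc_lt_top).ne

/-- The square of the constant in the `L²_t` Strichartz estimate for the frequencies
`N ≤ |ξ| < 2N` on a time interval of length `τ`. -/
def localStrichartzConst (μ N τ : ℝ) : ℝ≥0∞ :=
  ENNReal.ofReal (640 * √τ / √(μ * curvatureSize N))

variable {μ N a b : ℝ} {x : ℝ → ℝ}

/-- The `L²_t L^∞_x` estimate, with the supremum in `x` replaced by an arbitrary measurable choice
`x(t)`: only the time decay of the kernel enters. -/
lemma lintegral_enorm_planeWave_sq_le (hμ : 0 < μ) (hμ1 : μ ≤ 1) (hN : 0 < N) (hab : a < b)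
    (hx : Measurable x) (c : ℝ) {f : ℝ → ℂ} (hf : Continuous f) :
    ∫⁻ t in Set.Ioc a b, ‖∫ ξ in dyadicShell N, planeWave μ (x t) (t - c) ξ * f ξ‖ₑ ^ 2 ≤
      localStrichartzConst μ N (b - a) * ∫⁻ ξ in dyadicShell N, ‖f ξ‖ₑ ^ 2 := by
  have := isFiniteMeasure_restrict_dyadicShell N
  have hcurv := curvatureSize_pos hN
  obtain ⟨B, hB⟩ := isCompact_Icc.exists_bound_of_continuousOn (s := Set.Icc (-(2 * N)) (2 * N))
    hf.continuousOn
  refine lintegral_enorm_integral_sq_le (B := B)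
    (measurable_planeWave hμ (hx.comp measurable_fst) (by fun_prop) measurable_snd)
    (fun t ξ ↦ (norm_planeWave _ _ _ _).le) (fun t ↦ ?_) hf.measurable
    (ae_restrict_of_forall_mem (measurableSet_dyadicShell N)
      fun ξ hξ ↦ hB ξ (dyadicShell_subset_Icc N hξ))
  simp_rw [planeWave_mul_conj, sub_sub_sub_cancel_right]
  have hker : ∀ s, s ≠ t → ‖∫ ξ in dyadicShell N, planeWave μ (x t - x s) (t - s) ξ‖ₑ ≤
      ENNReal.ofReal (128 / √(μ * curvatureSize N)) * ENNReal.ofReal (√|t - s|)⁻¹ :=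
    fun s hs ↦ by
      rw [← ENNReal.ofReal_mul (by positivity), ← ofReal_norm]
      refine ENNReal.ofReal_le_ofReal ((norm_setIntegral_dyadicShell_planeWave_le _ hμ hμ1 hN
        (sub_ne_zero.2 hs.symm)).trans_eq ?_)
      rw [Real.sqrt_mul (abs_nonneg _), ← div_eq_mul_inv, div_div, mul_comm √|t - s|]
  calc ∫⁻ s in Set.Ioc a b, ‖∫ ξ in dyadicShell N, planeWave μ (x t - x s) (t - s) ξ‖ₑ
      ≤ ∫⁻ s in Set.Ioc a b,
          ENNReal.ofReal (128 / √(μ * curvatureSize N)) * ENNReal.ofReal (√|t - s|)⁻¹ :=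
        lintegral_mono_ae (ae_restrict_of_ae ((Measure.ae_ne volume t).mono hker))
    _ ≤ ENNReal.ofReal (128 / √(μ * curvatureSize N)) * ENNReal.ofReal (5 * √(b - a)) := by
        rw [lintegral_const_mul' _ _ ENNReal.ofReal_ne_top]
        gcongr
        exact lintegral_Ioc_inv_sqrt_abs_sub_le hab t
    _ = localStrichartzConst μ N (b - a) := by
        rw [← ENNReal.ofReal_mul (by positivity), localStrichartzConst]
        ring_nf

/-- `v` solves `∂_t v = -2πi ω_μ(ξ) v + F` on the time set `s` in Duhamel form, `v t` and `F t`
being spatial Fourier transforms. -/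
def IsMildSolution (μ : ℝ) (s : Set ℝ) (v F : ℝ → ℝ → ℂ) : Prop :=
  ∀ a ∈ s, ∀ t ∈ s, a ≤ t → ∀ ξ,
    v t ξ = planeWave μ 0 (t - a) ξ * v a ξ + ∫ σ in a..t, planeWave μ 0 (t - σ) ξ * F σ ξ

variable {s : Set ℝ} {v F : ℝ → ℝ → ℂ}

lemma IsMildSolution.mono {s' : Set ℝ} (h : IsMildSolution μ s v F) (hs : s' ⊆ s) :
    IsMildSolution μ s' v F :=
  fun a ha t ht ↦ h a (hs ha) t (hs ht)

lemma IsMildSolution.setIntegral_planeWave_mul_eq (h : IsMildSolution μ s v F) (hμ : 0 < μ)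
    (hv : Continuous (Function.uncurry v)) (hF : Continuous (Function.uncurry F)) {t : ℝ}
    (ha : a ∈ s) (ht : t ∈ s) (hat : a ≤ t) (y : ℝ) :
    ∫ ξ in dyadicShell N, planeWave μ y 0 ξ * v t ξ =
      (∫ ξ in dyadicShell N, planeWave μ y (t - a) ξ * v a ξ) +
        ∫ σ in Set.Ioc a t, ∫ ξ in dyadicShell N, planeWave μ y (t - σ) ξ * F σ ξ := by
  have := isFiniteMeasure_restrict_dyadicShell N
  have hpw : ∀ ξ, planeWave μ y 0 ξ * v t ξ = planeWave μ y (t - a) ξ * v a ξ +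
      ∫ σ in Set.Ioc a t, planeWave μ y (t - σ) ξ * F σ ξ := fun ξ ↦ by
    rw [h a ha t ht hat ξ, mul_add, intervalIntegral.integral_of_le hat, ← integral_const_mul]
    simp_rw [← mul_assoc, planeWave_mul, add_zero, zero_add]
  have hcont : Continuous (Function.uncurry fun ξ σ ↦ planeWave μ y (t - σ) ξ * F σ ξ) := by
    have := continuous_dispersion hμ
    unfold Function.uncurry planeWave
    fun_prop
  have hint : Integrable (Function.uncurry fun ξ σ ↦ planeWave μ y (t - σ) ξ * F σ ξ)
      ((volume.restrict (dyadicShell N)).prod (volume.restrict (Set.Ioc a t))) := by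
    rw [Measure.prod_restrict]
    exact (hcont.continuousOn.integrableOn_compact (isCompact_Icc.prod isCompact_Icc)).mono_set
      (Set.prod_mono (dyadicShell_subset_Icc N) Set.Ioc_subset_Icc_self)
  have hcont_a : Continuous fun ξ ↦ planeWave μ y (t - a) ξ * v a ξ :=
    (continuous_planeWave hμ y _).mul (hv.comp (Continuous.prodMk_right a))
  have hint_left : Integrable (fun ξ ↦ ∫ σ in Set.Ioc a t, planeWave μ y (t - σ) ξ * F σ ξ)
      (volume.restrict (dyadicShell N)) := hint.integral_prod_left
  simp_rw [hpw]
  rw [integral_add (integrableOn_dyadicShell_of_continuous hcont_a N) hint_left,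
    integral_integral_swap hint]

lemma add_sq_le_two_mul (a b : ℝ≥0∞) : (a + b) ^ 2 ≤ 2 * a ^ 2 + 2 * b ^ 2 := by
  have := ENNReal.rpow_add_le_mul_rpow_add_rpow a b (p := 2) (by norm_num)
  norm_num at this
  rw [← mul_add]
  exact_mod_cast this

lemma sq_lintegral_le {α : Type*} [MeasurableSpace α] {μ : Measure α} {f : α → ℝ≥0∞}
    (hf : AEMeasurable f μ) : (∫⁻ a, f a ∂μ) ^ 2 ≤ μ Set.univ * ∫⁻ a, f a ^ 2 ∂μ := by
  simpa using sq_lintegral_mul_le (μ := μ) (f := fun _ ↦ 1) aemeasurable_const hf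

lemma IsMildSolution.enorm_setIntegral_sq_le (h : IsMildSolution μ (Set.Icc a b) v F) (hμ : 0 < μ)
    (hv : Continuous (Function.uncurry v)) (hF : Continuous (Function.uncurry F)) {t : ℝ}
    (ht : t ∈ Set.Ioc a b) (y : ℝ) :
    ‖∫ ξ in dyadicShell N, planeWave μ y 0 ξ * v t ξ‖ₑ ^ 2 ≤
      2 * ‖∫ ξ in dyadicShell N, planeWave μ y (t - a) ξ * v a ξ‖ₑ ^ 2 +
        2 * (ENNReal.ofReal (b - a) *
          ∫⁻ σ in Set.Ioc a b, ‖∫ ξ in dyadicShell N, planeWave μ y (t - σ) ξ * F σ ξ‖ₑ ^ 2) := by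
  have := isFiniteMeasure_restrict_dyadicShell N
  have hmeas : StronglyMeasurable fun σ ↦
      ∫ ξ in dyadicShell N, planeWave μ y (t - σ) ξ * F σ ξ :=
    ((measurable_planeWave hμ measurable_const (by fun_prop) measurable_snd).mul
      hF.measurable).stronglyMeasurable.integral_prod_right
  rw [h.setIntegral_planeWave_mul_eq hμ hv hF ⟨le_rfl, ht.1.le.trans ht.2⟩ ⟨ht.1.le, ht.2⟩ ht.1.le]
  refine (pow_le_pow_left₀ zero_le (enorm_add_le _ _) 2).trans ((add_sq_le_two_mul _ _).trans ?_)
  gcongr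
  calc ‖∫ σ in Set.Ioc a t, ∫ ξ in dyadicShell N, planeWave μ y (t - σ) ξ * F σ ξ‖ₑ ^ 2
      ≤ (∫⁻ σ in Set.Ioc a b,
          ‖∫ ξ in dyadicShell N, planeWave μ y (t - σ) ξ * F σ ξ‖ₑ) ^ 2 := by
        gcongr
        exact (enorm_integral_le_lintegral_enorm _).trans
          (lintegral_mono_set (Set.Ioc_subset_Ioc le_rfl ht.2))
    _ ≤ _ := (sq_lintegral_le hmeas.measurable.enorm.aemeasurable).trans_eq (by simp)

variable {D₁ D₂ : ℝ≥0∞}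

lemma IsMildSolution.lintegral_enorm_setIntegral_sq_le (h : IsMildSolution μ (Set.Icc a b) v F)
    (hμ : 0 < μ) (hμ1 : μ ≤ 1) (hN : 0 < N) (hab : a < b) (hx : Measurable x)
    (hv : Continuous (Function.uncurry v)) (hF : Continuous (Function.uncurry F))
    (hD₁ : ∫⁻ ξ in dyadicShell N, ‖v a ξ‖ₑ ^ 2 ≤ D₁)
    (hD₂ : ∀ σ ∈ Set.Icc a b, ∫⁻ ξ in dyadicShell N, ‖F σ ξ‖ₑ ^ 2 ≤ D₂) :
    ∫⁻ t in Set.Ioc a b, ‖∫ ξ in dyadicShell N, planeWave μ (x t) 0 ξ * v t ξ‖ₑ ^ 2 ≤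
      2 * (localStrichartzConst μ N (b - a) * (D₁ + ENNReal.ofReal (b - a) ^ 2 * D₂)) := by
  have := isFiniteMeasure_restrict_dyadicShell N
  set u : ℝ → ℝ → ℂ := fun t σ ↦ ∫ ξ in dyadicShell N, planeWave μ (x t) (t - σ) ξ * F σ ξ
  have hu : Measurable fun p : ℝ × ℝ ↦ ‖u p.1 p.2‖ₑ ^ 2 := by
    have hpw : Measurable fun p : (ℝ × ℝ) × ℝ ↦ planeWave μ (x p.1.1) (p.1.1 - p.1.2) p.2 :=
      measurable_planeWave hμ (by fun_prop) (by fun_prop) measurable_snd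
    have hFm : Measurable fun p : (ℝ × ℝ) × ℝ ↦ F p.1.2 p.2 :=
      hF.measurable.comp (by fun_prop : Measurable fun p : (ℝ × ℝ) × ℝ ↦ (p.1.2, p.2))
    exact (hpw.mul hFm).stronglyMeasurable.integral_prod_right.measurable.enorm.pow_const 2
  have hu_int : Measurable fun t ↦ ∫⁻ σ in Set.Ioc a b, ‖u t σ‖ₑ ^ 2 := hu.lintegral_prod_right'
  have hv_slice : ∀ t, Continuous (v t) := fun t ↦ hv.comp (Continuous.prodMk_right t)
  have hF_slice : ∀ t, Continuous (F t) := fun t ↦ hF.comp (Continuous.prodMk_right t)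
  calc _ ≤ ∫⁻ t in Set.Ioc a b,
        (2 * ‖∫ ξ in dyadicShell N, planeWave μ (x t) (t - a) ξ * v a ξ‖ₑ ^ 2 +
          2 * (ENNReal.ofReal (b - a) * ∫⁻ σ in Set.Ioc a b, ‖u t σ‖ₑ ^ 2)) :=
        setLIntegral_mono' measurableSet_Ioc fun t ht ↦ h.enorm_setIntegral_sq_le hμ hv hF ht (x t)
    _ = 2 * (∫⁻ t in Set.Ioc a b,
          ‖∫ ξ in dyadicShell N, planeWave μ (x t) (t - a) ξ * v a ξ‖ₑ ^ 2) +
        2 * (ENNReal.ofReal (b - a) *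
          ∫⁻ σ in Set.Ioc a b, ∫⁻ t in Set.Ioc a b, ‖u t σ‖ₑ ^ 2) := by
        rw [lintegral_add_right _ ((hu_int.const_mul _).const_mul _),
          lintegral_const_mul' _ _ (by simp), lintegral_const_mul' _ _ (by simp),
          lintegral_const_mul' _ _ (by simp), lintegral_lintegral_swap hu.aemeasurable]
    _ ≤ 2 * (localStrichartzConst μ N (b - a) * D₁) + 2 * (ENNReal.ofReal (b - a) *
        ∫⁻ _ in Set.Ioc a b, localStrichartzConst μ N (b - a) * D₂) := by
        gcongr 2 * ?_ + 2 * (_ * ?_)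
        · refine (lintegral_enorm_planeWave_sq_le hμ hμ1 hN hab hx a (hv_slice a)).trans ?_
          gcongr
        · refine setLIntegral_mono' measurableSet_Ioc fun σ hσ ↦ ?_
          refine (lintegral_enorm_planeWave_sq_le hμ hμ1 hN hab hx σ (hF_slice σ)).trans ?_
          gcongr
          exact hD₂ σ ⟨hσ.1.le, hσ.2⟩
    _ = _ := by
        rw [setLIntegral_const, Real.volume_Ioc]
        ring

lemma IsMildSolution.lintegral_enorm_setIntegral_sq_le_nat_mul {T : ℝ}
    (h : IsMildSolution μ (Set.Icc 0 T) v F) (hμ : 0 < μ) (hμ1 : μ ≤ 1) (hN : 0 < N) (hT : 0 < T)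
    (hx : Measurable x) (hv : Continuous (Function.uncurry v))
    (hF : Continuous (Function.uncurry F))
    (hD₁ : ∀ σ ∈ Set.Icc 0 T, ∫⁻ ξ in dyadicShell N, ‖v σ ξ‖ₑ ^ 2 ≤ D₁)
    (hD₂ : ∀ σ ∈ Set.Icc 0 T, ∫⁻ ξ in dyadicShell N, ‖F σ ξ‖ₑ ^ 2 ≤ D₂) {n : ℕ} (hn : 0 < n) :
    ∫⁻ t in Set.Ioc 0 T, ‖∫ ξ in dyadicShell N, planeWave μ (x t) 0 ξ * v t ξ‖ₑ ^ 2 ≤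
      n * (2 * (localStrichartzConst μ N (T / n) * (D₁ + ENNReal.ofReal (T / n) ^ 2 * D₂))) := by
  set τ := T / n
  have hn' : (0 : ℝ) < n := Nat.cast_pos.2 hn
  have hτ : 0 < τ := div_pos hT hn'
  have hnτ : n * τ = T := mul_div_cancel₀ T hn'.ne'
  have hsteps : ∀ j : ℕ, j ≤ n →
      ∫⁻ t in Set.Ioc 0 (j * τ), ‖∫ ξ in dyadicShell N, planeWave μ (x t) 0 ξ * v t ξ‖ₑ ^ 2 ≤
        j * (2 * (localStrichartzConst μ N τ * (D₁ + ENNReal.ofReal τ ^ 2 * D₂))) := by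
    intro j
    induction j with
    | zero => simp
    | succ j ih =>
      intro hj
      have hj0 : 0 ≤ j * τ := by positivity
      have hlt : j * τ < (j + 1 : ℕ) * τ := by push_cast; linarith
      have hjT : (j + 1 : ℕ) * τ ≤ T := by rw [← hnτ]; gcongr
      have hlen : (j + 1 : ℕ) * τ - j * τ = τ := by push_cast; ring
      have hsub : Set.Icc (j * τ) ((j + 1 : ℕ) * τ) ⊆ Set.Icc 0 T := Set.Icc_subset_Icc hj0 hjT
      have hstep := (h.mono hsub).lintegral_enorm_setIntegral_sq_le hμ hμ1 hN hlt hx hv hF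
        (hD₁ _ (hsub ⟨le_rfl, hlt.le⟩)) fun σ hσ ↦ hD₂ σ (hsub hσ)
      rw [hlen] at hstep
      rw [← Set.Ioc_union_Ioc_eq_Ioc hj0 hlt.le]
      refine (lintegral_union_le _ _ _).trans ((add_le_add (ih (by omega)) hstep).trans_eq ?_)
      push_cast
      ring
  simpa only [hnτ] using hsteps n le_rfl

end LocalStrichartz

section SchwartzCurves

section Pairing

variable {D E F G : Type*} [NormedAddCommGroup D] [NormedSpace ℝ D]
  [NormedAddCommGroup E] [NormedSpace ℝ E] [NormedAddCommGroup F] [NormedSpace ℝ F]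
  [NormedAddCommGroup G] [NormedSpace ℝ G]

lemma seminorm_pairing_le (B : E →L[ℝ] F →L[ℝ] G) (k n : ℕ) (f : 𝓢(D, E)) (g : 𝓢(D, F)) :
    SchwartzMap.seminorm ℝ k n (pairing B f g) ≤
      ‖B‖ * ∑ i ∈ Finset.range (n + 1), n.choose i * SchwartzMap.seminorm ℝ k i f *
        SchwartzMap.seminorm ℝ 0 (n - i) g := by
  refine SchwartzMap.seminorm_le_bound ℝ _ _ _ (by positivity) fun x ↦ ?_
  calc ‖x‖ ^ k * ‖iteratedFDeriv ℝ n (pairing B f g) x‖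
      ≤ ‖x‖ ^ k * (‖B‖ * ∑ i ∈ Finset.range (n + 1), n.choose i * ‖iteratedFDeriv ℝ i f x‖ *
          ‖iteratedFDeriv ℝ (n - i) g x‖) := by
        gcongr
        exact B.norm_iteratedFDeriv_le_of_bilinear (f.smooth n) (g.smooth n) x le_rfl
    _ = ‖B‖ * ∑ i ∈ Finset.range (n + 1), n.choose i * (‖x‖ ^ k * ‖iteratedFDeriv ℝ i f x‖) *
          (‖x‖ ^ 0 * ‖iteratedFDeriv ℝ (n - i) g x‖) := by
        rw [mul_left_comm, Finset.mul_sum]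
        congr! 2
        ring
    _ ≤ _ := by
        gcongr
        · exact SchwartzMap.le_seminorm ℝ _ _ _ _
        · exact SchwartzMap.le_seminorm ℝ _ _ _ _

lemma continuous_pairing (B : E →L[ℝ] F →L[ℝ] G) :
    Continuous fun p : 𝓢(D, E) × 𝓢(D, F) ↦ pairing B p.1 p.2 := by
  refine continuous_iff_continuousAt.2 fun p ↦
    ((schwartz_withSeminorms ℝ D G).tendsto_nhds _ _).2 fun ⟨k, n⟩ e he ↦ ?_
  have hsplit : ∀ q : 𝓢(D, E) × 𝓢(D, F), pairing B q.1 q.2 - pairing B p.1 p.2 =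
      pairing B (q.1 - p.1) q.2 + pairing B p.1 (q.2 - p.2) := fun q ↦ by
    ext x
    simp only [sub_apply, pairing_apply_apply, map_sub, sub_add_sub_cancel]
  set b : 𝓢(D, E) → 𝓢(D, F) → ℝ := fun f g ↦ ‖B‖ * ∑ i ∈ Finset.range (n + 1),
    n.choose i * SchwartzMap.seminorm ℝ k i f * SchwartzMap.seminorm ℝ 0 (n - i) g
  have hb : Continuous (Function.uncurry b) :=
    continuous_const.mul <| continuous_finsetSum _ fun i _ ↦ (continuous_const.mul
      (((schwartz_withSeminorms ℝ D E).continuous_seminorm (k, i)).comp continuous_fst)).mul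
      (((schwartz_withSeminorms ℝ D F).continuous_seminorm (0, n - i)).comp continuous_snd)
  have hb_split : Continuous fun q : 𝓢(D, E) × 𝓢(D, F) ↦
      b (q.1 - p.1) q.2 + b p.1 (q.2 - p.2) :=
    (hb.comp ((continuous_fst.sub continuous_const).prodMk continuous_snd)).add
      (hb.comp (continuous_const.prodMk (continuous_snd.sub continuous_const)))
  have hbp : b (p.1 - p.1) p.2 + b p.1 (p.2 - p.2) = 0 := by simp [b]
  filter_upwards [(hb_split.tendsto p).eventually (gt_mem_nhds (hbp.trans_lt he))] with q hq
  rw [hsplit]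
  exact ((map_add_le_add _ _ _).trans
    (add_le_add (seminorm_pairing_le B k n _ _) (seminorm_pairing_le B k n _ _))).trans_lt hq

end Pairing

/-- The square `u²` as a Schwartz function. -/
def schwartzSq (u : 𝓢(ℝ, ℂ)) : 𝓢(ℝ, ℂ) := pairing (ContinuousLinearMap.mul ℝ ℂ) u u

lemma schwartzSq_apply (u : 𝓢(ℝ, ℂ)) (x : ℝ) : schwartzSq u x = u x * u x := rfl

lemma continuous_schwartzSq : Continuous schwartzSq :=
  (continuous_pairing _).comp (continuous_id.prodMk continuous_id)

lemma fourier_schwartzSq (u : 𝓢(ℝ, ℂ)) (ξ : ℝ) :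
    𝓕 (schwartzSq u) ξ = ∫ ζ, 𝓕 u ζ * 𝓕 u (ξ - ζ) := by
  have hneg : ∀ x, 𝓕 (𝓕 u) (-x) = u x := fun x ↦ by
    rw [SchwartzMap.fourier_coe, ← Real.fourierInv_eq_fourier_neg, ← SchwartzMap.fourierInv_coe,
      FourierTransform.fourierInv_fourier_eq]
  have hsq : schwartzSq u =
      𝓕⁻ (SchwartzMap.convolution (ContinuousLinearMap.mul ℂ ℂ) (𝓕 u) (𝓕 u)) := by
    ext x
    rw [SchwartzMap.fourierInv_coe, Real.fourierInv_eq_fourier_neg, ← SchwartzMap.fourier_coe,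
      SchwartzMap.fourier_convolution, pairing_apply_apply, hneg, schwartzSq_apply,
      ContinuousLinearMap.mul_apply']
  rw [hsq, FourierTransform.fourier_fourierInv_eq, SchwartzMap.convolution_apply]
  rfl

lemma fourier_derivCLM (u : 𝓢(ℝ, ℂ)) (ξ : ℝ) :
    𝓕 (derivCLM ℂ ℂ u) ξ = 2 * Real.pi * Complex.I * ξ * 𝓕 u ξ := by
  rw [SchwartzMap.fourier_coe, SchwartzMap.fourier_coe]
  exact congrFun (Real.fourier_deriv u.integrable u.differentiable (derivCLM ℂ ℂ u).integrable) ξ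

lemma continuous_uncurry_schwartz {X : Type*} [TopologicalSpace X] {u : X → 𝓢(ℝ, ℂ)}
    (hu : Continuous u) : Continuous (Function.uncurry fun t ξ ↦ u t ξ) :=
  continuous_eval.comp ((((toBoundedContinuousFunctionCLM ℝ ℝ ℂ).continuous.comp hu).comp
    continuous_fst).prodMk continuous_snd)

lemma integrable_uncurry_schwartz {u : ℝ → 𝓢(ℝ, ℂ)} (hu : Continuous u) (a b : ℝ) :
    Integrable (Function.uncurry fun t ξ ↦ u t ξ)
      ((volume.restrict (Set.Ioc a b)).prod volume) := by
  have hL1 : Continuous fun t ↦ ∫ ξ, ‖u t ξ‖ := by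
    simp_rw [← SchwartzMap.norm_toLp_one]
    exact continuous_norm.comp (continuous_toLp.comp hu)
  exact (integrable_prod_iff (continuous_uncurry_schwartz hu).aestronglyMeasurable).2
    ⟨.of_forall fun t ↦ (u t).integrable,
      hL1.integrableOn_Ioc⟩

end SchwartzCurves

section Duhamel

lemma fourierInv_eq_integral_planeWave (μ : ℝ) (g : ℝ → ℂ) (x : ℝ) :
    𝓕⁻ g x = ∫ ξ, planeWave μ x 0 ξ * g ξ := by
  rw [Real.fourierInv_eq']
  simp [planeWave, mul_comm]

lemma integrable_planeWave_mul {f : ℝ → ℂ} (hf : Integrable f) {μ : ℝ} (hμ : 0 < μ) (x t : ℝ) :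
    Integrable fun ξ ↦ planeWave μ x t ξ * f ξ :=
  hf.bdd_mul (continuous_planeWave hμ x t).aestronglyMeasurable
    (.of_forall fun _ ↦ (norm_planeWave _ _ _ _).le)

lemma fourierInv_mul_add_mul {f g : ℝ → ℂ} (hf : Integrable f) (hg : Integrable g) (a b : ℂ)
    (x : ℝ) : 𝓕⁻ (fun ξ ↦ a * f ξ + b * g ξ) x = a * 𝓕⁻ f x + b * 𝓕⁻ g x := by
  simp_rw [fourierInv_eq_integral_planeWave 1]
  rw [← integral_const_mul, ← integral_const_mul,
    ← integral_add ((integrable_planeWave_mul hf one_pos x 0).const_mul a)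
      ((integrable_planeWave_mul hg one_pos x 0).const_mul b)]
  congr! 2
  ring

variable {a b : ℝ} {Γ : ℝ → ℝ → ℂ}

lemma intervalIntegrable_fourierInv (hab : a ≤ b)
    (hΓ : Integrable (Function.uncurry Γ) ((volume.restrict (Set.Ioc a b)).prod volume)) (x : ℝ) :
    IntervalIntegrable (fun σ ↦ 𝓕⁻ (Γ σ) x) volume a b ∧
      ∫ σ in a..b, 𝓕⁻ (Γ σ) x = 𝓕⁻ (fun ξ ↦ ∫ σ in a..b, Γ σ ξ) x := by
  have hint : Integrable (Function.uncurry fun σ ξ ↦ planeWave 1 x 0 ξ * Γ σ ξ)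
      ((volume.restrict (Set.Ioc a b)).prod volume) :=
    hΓ.bdd_mul ((continuous_planeWave one_pos x 0).comp continuous_snd).aestronglyMeasurable
      (.of_forall fun p ↦ (norm_planeWave _ _ _ _).le)
  simp_rw [fourierInv_eq_integral_planeWave 1, intervalIntegral.integral_of_le hab,
    ← integral_const_mul]
  exact ⟨(intervalIntegrable_iff_integrableOn_Ioc_of_le hab).2 hint.integral_prod_left,
    integral_integral_swap hint⟩

lemma fourier_sub_fourier_eq_intervalIntegral {U : ℝ → ℝ → ℂ} (hab : a ≤ b)
    (hΓ_cont : Continuous (Function.uncurry Γ))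
    (hΓ : Integrable (Function.uncurry Γ) ((volume.restrict (Set.Ioc a b)).prod volume))
    (hUa : Integrable (U a)) (hUb : Integrable (U b))
    (hU : ∀ σ ∈ Set.Icc a b, ∀ x, HasDerivAt (fun τ ↦ U τ x) (𝓕⁻ (Γ σ) x) σ) (ξ : ℝ) :
    𝓕 (U b) ξ - 𝓕 (U a) ξ = ∫ σ in a..b, Γ σ ξ := by
  set h : ℝ → ℂ := fun ξ ↦ ∫ σ in a..b, Γ σ ξ
  have hh_cont : Continuous h :=
    intervalIntegral.continuous_parametric_intervalIntegral_of_continuous'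
      (f := fun ξ σ ↦ Γ σ ξ) (hΓ_cont.comp continuous_swap) a b
  have hh_int : Integrable h := by
    simp_rw [h, intervalIntegral.integral_of_le hab]
    exact hΓ.integral_prod_right
  have hinv : 𝓕⁻ h = U b - U a := funext fun x ↦ by
    obtain ⟨hint, heq⟩ := intervalIntegrable_fourierInv hab hΓ x
    rw [← heq, intervalIntegral.integral_eq_sub_of_hasDerivAt
      (fun σ hσ ↦ hU σ (Set.uIcc_of_le hab ▸ hσ) x) hint, Pi.sub_apply]
  have hfourier_int : Integrable (𝓕 h) := by
    have := (hUb.sub hUa).comp_neg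
    rw [← hinv] at this
    refine this.congr (.of_forall fun x ↦ ?_)
    simp only [Real.fourierInv_eq_fourier_neg, neg_neg]
  have hconv : ∀ {f : ℝ → ℂ}, Integrable f → _ := (Real.fourierIntegral_convergent_iff ξ).2
  calc 𝓕 (U b) ξ - 𝓕 (U a) ξ = 𝓕 (U b - U a) ξ := by
        simp_rw [Real.fourier_eq, Pi.sub_apply, smul_sub]
        rw [integral_sub (hconv hUb) (hconv hUa)]
    _ = h ξ := by rw [← hinv, hh_cont.fourier_fourierInv_eq hh_int hfourier_int]

lemma hasDerivAt_planeWave (μ x t ξ σ : ℝ) :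
    HasDerivAt (fun σ ↦ planeWave μ x (t - σ) ξ)
      (planeWave μ x (t - σ) ξ * (2 * Real.pi * Complex.I * dispersion μ ξ)) σ := by
  have hphase : HasDerivAt (fun σ ↦ 2 * Real.pi * (x * ξ - (t - σ) * dispersion μ ξ))
      (2 * Real.pi * dispersion μ ξ) σ :=
    ((((hasDerivAt_id σ).const_sub t).mul_const (dispersion μ ξ)).const_sub
      (x * ξ)).const_mul (2 * Real.pi) |>.congr_deriv (by ring)
  refine (hphase.ofReal_comp.mul_const Complex.I).cexp.congr_deriv ?_
  rw [planeWave]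
  push_cast
  ring

lemma isMildSolution_of_sub_eq_integral {μ T : ℝ} {v F : ℝ → ℝ → ℂ}
    (hv : Continuous (Function.uncurry v)) (hF : Continuous (Function.uncurry F))
    (h : ∀ a ∈ Set.Icc 0 T, ∀ t ∈ Set.Icc 0 T, a ≤ t → ∀ ξ, v t ξ - v a ξ =
      ∫ σ in a..t, (-(2 * Real.pi * Complex.I * dispersion μ ξ) * v σ ξ + F σ ξ)) :
    IsMildSolution μ (Set.Icc 0 T) v F := by
  intro a ha t ht hat ξ
  have hv_slice : Continuous fun σ ↦ v σ ξ := hv.comp (Continuous.prodMk_left ξ)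
  have hF_slice : Continuous fun σ ↦ F σ ξ := hF.comp (Continuous.prodMk_left ξ)
  set Γ : ℝ → ℂ := fun σ ↦ -(2 * Real.pi * Complex.I * dispersion μ ξ) * v σ ξ + F σ ξ
  have hΓ : Continuous Γ := by fun_prop
  set w : ℝ → ℂ := fun s ↦ v a ξ + ∫ σ in a..s, Γ σ
  have hw : ∀ s, HasDerivAt w (Γ s) s := fun s ↦
    (hΓ.integral_hasStrictDerivAt a s).hasDerivAt.const_add _
  have hwv : ∀ s ∈ Set.Icc a t, w s = v s ξ := fun s hs ↦ by
    simp only [w, Γ, ← h a ha s ⟨ha.1.trans hs.1, hs.2.trans ht.2⟩ hs.1 ξ, add_sub_cancel]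
  have hpw : Continuous fun σ ↦ planeWave μ 0 (t - σ) ξ :=
    continuous_iff_continuousAt.2 fun σ ↦ (hasDerivAt_planeWave μ 0 t ξ σ).continuousAt
  have hftc := intervalIntegral.integral_eq_sub_of_hasDerivAt (a := a) (b := t)
    (f := fun σ ↦ planeWave μ 0 (t - σ) ξ * w σ) (f' := fun σ ↦ planeWave μ 0 (t - σ) ξ * F σ ξ)
    (fun s hs ↦ ((hasDerivAt_planeWave μ 0 t ξ s).mul (hw s)).congr_deriv (by
      rw [hwv s (Set.uIcc_of_le hat ▸ hs)]
      ring)) ((hpw.mul hF_slice).intervalIntegrable _ _)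
  have hone : planeWave μ 0 0 ξ = 1 := by simp [planeWave]
  rw [hftc, hwv t ⟨hat, le_rfl⟩, hwv a ⟨le_rfl, hat⟩, sub_self, hone]
  ring

/-- A curve of complex Schwartz functions solving the Whitham equation pointwise on `[0, T]`. -/
def IsWhithamSolution (ε μ T : ℝ) (u : ℝ → 𝓢(ℝ, ℂ)) : Prop :=
  ∀ t ∈ Set.Icc 0 T, ∀ x, HasDerivAt (fun τ ↦ u τ x)
    (-(sqrtTmul μ (deriv (u t)) x + (ε / 2 : ℂ) * deriv (fun y ↦ u t y ^ 2) x)) t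

lemma Tsymb_le_one {μ : ℝ} (hμ : 0 < μ) (ξ : ℝ) : Tsymb μ ξ ≤ 1 := by
  rw [Tsymb]
  split_ifs with hξ
  · exact le_rfl
  · have : 0 < √μ * |ξ| := mul_pos (Real.sqrt_pos.2 hμ) (abs_pos.2 hξ)
    exact (div_le_one this).2 (tanh_le_self this.le)

lemma continuous_sqrt_Tsymb {μ : ℝ} (hμ : 0 < μ) : Continuous fun ξ ↦ ((√(Tsymb μ ξ) : ℝ) : ℂ) :=
  Complex.continuous_ofReal.comp (continuous_Tsymb hμ).sqrt

lemma norm_sqrt_Tsymb_le_one {μ : ℝ} (hμ : 0 < μ) (ξ : ℝ) : ‖((√(Tsymb μ ξ) : ℝ) : ℂ)‖ ≤ 1 := by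
  rw [Complex.norm_real, Real.norm_of_nonneg (Real.sqrt_nonneg _)]
  exact Real.sqrt_le_one.2 (Tsymb_le_one hμ ξ)

lemma whitham_rhs_eq_fourierInv (ε : ℝ) {μ : ℝ} (hμ : 0 < μ) (u : 𝓢(ℝ, ℂ)) (x : ℝ) :
    -(sqrtTmul μ (deriv u) x + (ε / 2 : ℂ) * deriv (fun y ↦ u y ^ 2) x) =
      𝓕⁻ (fun ξ ↦ -1 * (√(Tsymb μ ξ) * 𝓕 (derivCLM ℂ ℂ u) ξ) +
        -(ε / 2 : ℂ) * 𝓕 (derivCLM ℂ ℂ (schwartzSq u)) ξ) x := by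
  have hlin : Integrable fun ξ ↦ ((√(Tsymb μ ξ) : ℝ) : ℂ) * 𝓕 (derivCLM ℂ ℂ u) ξ :=
    (𝓕 (derivCLM ℂ ℂ u)).integrable.bdd_mul (continuous_sqrt_Tsymb hμ).aestronglyMeasurable
      (.of_forall (norm_sqrt_Tsymb_le_one hμ))
  have hsq : deriv (fun y ↦ u y ^ 2) x = 𝓕⁻ ⇑(𝓕 (derivCLM ℂ ℂ (schwartzSq u)) : 𝓢(ℝ, ℂ)) x := by
    rw [← SchwartzMap.fourierInv_coe, FourierTransform.fourierInv_fourier_eq]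
    simp_rw [sq]
    rfl
  rw [fourierInv_mul_add_mul hlin (𝓕 (derivCLM ℂ ℂ (schwartzSq u))).integrable, ← hsq,
    SchwartzMap.fourier_coe, sqrtTmul]
  change _ = -1 * 𝓕⁻ (fun ξ ↦ ((√(Tsymb μ ξ) : ℝ) : ℂ) * 𝓕 (deriv u) ξ) x + _
  ring

lemma IsWhithamSolution.isMildSolution {ε μ T : ℝ} {u : ℝ → 𝓢(ℝ, ℂ)}
    (h : IsWhithamSolution ε μ T u) (hμ : 0 < μ) (hu : Continuous u) :
    IsMildSolution μ (Set.Icc 0 T) (fun t ↦ (𝓕 (u t) : 𝓢(ℝ, ℂ)))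
      (fun t ξ ↦ -(ε / 2 : ℂ) * 𝓕 (derivCLM ℂ ℂ (schwartzSq (u t))) ξ) := by
  have hfourier := (FourierTransform.fourierCLM ℂ 𝓢(ℝ, ℂ)).continuous
  have hderiv := (derivCLM ℂ ℂ).continuous
  have hv : Continuous fun t ↦ (𝓕 (u t) : 𝓢(ℝ, ℂ)) := hfourier.comp hu
  have hlin : Continuous fun t ↦ (𝓕 (derivCLM ℂ ℂ (u t)) : 𝓢(ℝ, ℂ)) :=
    hfourier.comp (hderiv.comp hu)
  have hsq : Continuous fun t ↦ (𝓕 (derivCLM ℂ ℂ (schwartzSq (u t))) : 𝓢(ℝ, ℂ)) :=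
    hfourier.comp (hderiv.comp (continuous_schwartzSq.comp hu))
  refine isMildSolution_of_sub_eq_integral (continuous_uncurry_schwartz hv)
    (continuous_const.mul (continuous_uncurry_schwartz hsq)) fun a ha t ht hat ξ ↦ ?_
  have hT := (continuous_sqrt_Tsymb hμ).comp (continuous_snd (X := ℝ))
  have hint := fun {w : ℝ → 𝓢(ℝ, ℂ)} (hw : Continuous w) ↦ integrable_uncurry_schwartz hw a t
  set Γ : ℝ → ℝ → ℂ := fun t ξ ↦ -1 * (√(Tsymb μ ξ) * 𝓕 (derivCLM ℂ ℂ (u t)) ξ) +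
    -(ε / 2 : ℂ) * 𝓕 (derivCLM ℂ ℂ (schwartzSq (u t))) ξ
  have hΓ : Continuous (Function.uncurry Γ) :=
    ((hT.mul (continuous_uncurry_schwartz hlin)).const_mul (-1)).add
      ((continuous_uncurry_schwartz hsq).const_mul _)
  have hkey := fourier_sub_fourier_eq_intervalIntegral (U := fun t ↦ u t) hat hΓ
    ((((hint hlin).bdd_mul hT.aestronglyMeasurable
      (.of_forall fun p ↦ norm_sqrt_Tsymb_le_one hμ p.2)).const_mul (-1)).add
      ((hint hsq).const_mul _)) (u a).integrable (u t).integrable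
    (fun σ hσ x ↦ whitham_rhs_eq_fourierInv ε hμ (u σ) x ▸
      h σ ⟨ha.1.trans hσ.1, hσ.2.trans ht.2⟩ x) ξ
  simp only [SchwartzMap.fourier_coe (u _)]
  refine hkey.trans (intervalIntegral.integral_congr fun σ _ ↦ ?_)
  simp only [Γ, fourier_derivCLM (u σ), dispersion, SchwartzMap.fourier_coe (u σ)]
  push_cast
  ring

end Duhamel

section Sobolev

lemma continuous_jap : Continuous jap :=
  (continuous_const.add (continuous_pow 2)).rpow_const fun _ ↦ Or.inr (by norm_num)

lemma jap_sq (ξ : ℝ) : jap ξ ^ 2 = 1 + ξ ^ 2 := by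
  rw [jap, ← Real.sqrt_eq_rpow, Real.sq_sqrt (by positivity)]

lemma one_le_jap (ξ : ℝ) : 1 ≤ jap ξ :=
  Real.one_le_rpow (le_add_of_nonneg_right (sq_nonneg ξ)) (by norm_num)

lemma jap_pos (ξ : ℝ) : 0 < jap ξ := one_pos.trans_le (one_le_jap ξ)

lemma abs_le_jap (ξ : ℝ) : |ξ| ≤ jap ξ :=
  abs_le_of_sq_le_sq (by linarith [jap_sq ξ]) (jap_pos ξ).le

lemma jap_add_le (ξ ζ : ℝ) : jap (ξ + ζ) ≤ jap ξ + jap ζ := by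
  have hmul : ξ * ζ ≤ jap ξ * jap ζ := calc
    ξ * ζ ≤ |ξ| * |ζ| := (le_abs_self _).trans_eq (abs_mul _ _)
    _ ≤ jap ξ * jap ζ := mul_le_mul (abs_le_jap ξ) (abs_le_jap ζ) (abs_nonneg _) (jap_pos ξ).le
  refine le_of_sq_le_sq ?_ (add_pos (jap_pos ξ) (jap_pos ζ)).le
  linarith [jap_sq ξ, jap_sq ζ, jap_sq (ξ + ζ), add_sq (jap ξ) (jap ζ), add_sq ξ ζ]

/-- The weight `⟨ξ⟩ ^ r` of the `H^r` norm, as an extended nonnegative real. -/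
def sobolevWeight (r ξ : ℝ) : ℝ≥0∞ := ENNReal.ofReal (jap ξ ^ r)

lemma measurable_sobolevWeight (r : ℝ) : Measurable (sobolevWeight r) :=
  (continuous_jap.rpow_const fun ξ ↦ Or.inl (jap_pos ξ).ne').measurable.ennreal_ofReal

lemma sobolevWeight_add (r s ξ : ℝ) :
    sobolevWeight (r + s) ξ = sobolevWeight r ξ * sobolevWeight s ξ := by
  rw [sobolevWeight, Real.rpow_add (jap_pos ξ),
    ENNReal.ofReal_mul (Real.rpow_nonneg (jap_pos ξ).le _)]
  rfl

lemma one_le_sobolevWeight {r : ℝ} (hr : 0 ≤ r) (ξ : ℝ) : 1 ≤ sobolevWeight r ξ :=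
  ENNReal.one_le_ofReal.2 (Real.one_le_rpow (one_le_jap ξ) hr)

lemma sobolevWeight_add_le {r : ℝ} (hr : 0 ≤ r) (ξ ζ : ℝ) :
    sobolevWeight r (ξ + ζ) ≤
      ENNReal.ofReal (2 ^ r) * (sobolevWeight r ξ + sobolevWeight r ζ) := by
  wlog hle : jap ξ ≤ jap ζ generalizing ξ ζ
  · rw [add_comm ξ, add_comm (sobolevWeight r ξ)]
    exact this ζ ξ (le_of_not_ge hle)
  calc sobolevWeight r (ξ + ζ)
      ≤ ENNReal.ofReal ((2 * jap ζ) ^ r) := ENNReal.ofReal_le_ofReal <|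
        Real.rpow_le_rpow (jap_pos _).le (by linarith [jap_add_le ξ ζ]) hr
    _ = ENNReal.ofReal (2 ^ r) * sobolevWeight r ζ := by
        rw [Real.mul_rpow zero_le_two (jap_pos ζ).le, ENNReal.ofReal_mul (by positivity)]
        rfl
    _ ≤ _ := by
        gcongr
        exact le_add_self

/-- The squared `H^r` norm `∫ (⟨ξ⟩ ^ r |v(ξ)|)² dξ` of the function with Fourier transform `v`. -/
def sobolevEnergy (r : ℝ) (v : ℝ → ℂ) : ℝ≥0∞ := ∫⁻ ξ, (sobolevWeight r ξ * ‖v ξ‖ₑ) ^ 2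

lemma HsNorm_sq (r : ℝ) (f : ℝ → ℂ) : HsNorm r f ^ 2 = sobolevEnergy r (𝓕 f) := by
  rw [HsNorm, eLpNorm_eq_lintegral_rpow_enorm_toReal (by norm_num) (by norm_num)]
  simp only [ENNReal.toReal_ofNat, rpow_half_sq, enorm_mul, enorm_norm, ENNReal.rpow_ofNat,
    Real.enorm_of_nonneg (Real.rpow_nonneg (jap_pos _).le r)]
  rfl

/-- `∫ ⟨ξ⟩ ^ (2 - 2r) dξ`, the constant of the embedding of `H^r` into functions whose Fourier
transform has a finite first absolute moment. -/
def sobolevEmbeddingConst (r : ℝ) : ℝ≥0∞ := ∫⁻ ξ, sobolevWeight (1 - r) ξ ^ 2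

lemma sobolevEmbeddingConst_lt_top {r : ℝ} (hr : 3 / 2 < r) : sobolevEmbeddingConst r < ⊤ := by
  have hint : Integrable fun ξ : ℝ ↦ (1 + ‖ξ‖ ^ 2) ^ (-(2 * r - 2) / 2) :=
    integrable_rpow_neg_one_add_norm_sq (by rw [Module.finrank_self]; push_cast; linarith)
  refine lt_of_eq_of_lt (lintegral_congr fun ξ ↦ ?_) hint.lintegral_lt_top
  rw [sobolevWeight, ← ENNReal.ofReal_pow (Real.rpow_nonneg (jap_pos ξ).le _), Real.norm_eq_abs,
    sq_abs, ← jap_sq, ← Real.rpow_natCast_mul (jap_pos ξ).le,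
    ← Real.rpow_mul_natCast (jap_pos ξ).le]
  congr 2
  push_cast
  ring

lemma sq_lintegral_sobolevWeight_one_mul_enorm_le (r : ℝ) {v : ℝ → ℂ} (hv : Measurable v) :
    (∫⁻ ξ, sobolevWeight 1 ξ * ‖v ξ‖ₑ) ^ 2 ≤ sobolevEmbeddingConst r * sobolevEnergy r v := by
  have hsplit : ∀ ξ, sobolevWeight 1 ξ * ‖v ξ‖ₑ =
      sobolevWeight (1 - r) ξ * (sobolevWeight r ξ * ‖v ξ‖ₑ) := fun ξ ↦ by
    rw [← mul_assoc, ← sobolevWeight_add, sub_add_cancel]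
  simp_rw [hsplit]
  exact sq_lintegral_mul_le (measurable_sobolevWeight _).aemeasurable
    ((measurable_sobolevWeight r).mul hv.enorm).aemeasurable

lemma sq_lintegral_enorm_le (r : ℝ) {v : ℝ → ℂ} (hv : Measurable v) :
    (∫⁻ ξ, ‖v ξ‖ₑ) ^ 2 ≤ sobolevEmbeddingConst r * sobolevEnergy r v :=
  (pow_le_pow_left₀ zero_le (lintegral_mono fun ξ ↦
    le_mul_of_one_le_left' (one_le_sobolevWeight zero_le_one ξ)) 2).trans
    (sq_lintegral_sobolevWeight_one_mul_enorm_le r hv)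

/-- Young's inequality `L¹ * L² ⊆ L²`. -/
lemma lintegral_sq_lintegral_mul_sub_le {G : Type*} [AddGroup G] [MeasurableSpace G]
    [MeasurableAdd G] [MeasurableSub₂ G] {μ : Measure G} [SFinite μ] [μ.IsAddRightInvariant]
    {f g : G → ℝ≥0∞} (hf : Measurable f) (hg : Measurable g) :
    ∫⁻ x, (∫⁻ y, f y * g (x - y) ∂μ) ^ 2 ∂μ ≤ (∫⁻ y, f y ∂μ) ^ 2 * ∫⁻ x, g x ^ 2 ∂μ := by
  have hmeas : Measurable fun p : G × G ↦ f p.2 * g (p.1 - p.2) ^ 2 :=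
    (hf.comp measurable_snd).mul ((hg.comp measurable_sub).pow_const 2)
  have hcs : ∀ x, (∫⁻ y, f y * g (x - y) ∂μ) ^ 2 ≤
      (∫⁻ y, f y ∂μ) * ∫⁻ y, f y * g (x - y) ^ 2 ∂μ := fun x ↦ by
    have := sq_lintegral_mul_le (μ := μ) (f := fun y ↦ f y ^ ((1 : ℝ) / 2))
      (g := fun y ↦ f y ^ ((1 : ℝ) / 2) * g (x - y)) (hf.pow_const _).aemeasurable
      ((hf.pow_const _).mul (hg.comp (measurable_const.sub measurable_id))).aemeasurable
    simpa only [mul_pow, rpow_half_sq, ← mul_assoc, ← sq] using this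
  calc ∫⁻ x, (∫⁻ y, f y * g (x - y) ∂μ) ^ 2 ∂μ
      ≤ ∫⁻ x, (∫⁻ y, f y ∂μ) * ∫⁻ y, f y * g (x - y) ^ 2 ∂μ ∂μ := lintegral_mono hcs
    _ = (∫⁻ y, f y ∂μ) * ∫⁻ y, ∫⁻ x, f y * g (x - y) ^ 2 ∂μ ∂μ := by
        rw [lintegral_const_mul _ hmeas.lintegral_prod_right',
          lintegral_lintegral_swap hmeas.aemeasurable]
    _ = (∫⁻ y, f y ∂μ) * ∫⁻ y, f y * ∫⁻ x, g x ^ 2 ∂μ ∂μ := by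
        congr! 3 with y
        have hgy : Measurable fun x ↦ g (x - y) ^ 2 :=
          (hg.comp (measurable_id.sub_const y)).pow_const 2
        rw [lintegral_const_mul _ hgy, lintegral_sub_right_eq_self fun x ↦ g x ^ 2]
    _ = (∫⁻ y, f y ∂μ) ^ 2 * ∫⁻ x, g x ^ 2 ∂μ := by
        rw [lintegral_mul_const _ hf, sq, mul_assoc]

lemma sobolevWeight_mul_enorm_convolution_le {r : ℝ} (hr : 0 ≤ r) {v : ℝ → ℂ}
    (hv : Measurable v) (ξ : ℝ) :
    sobolevWeight r ξ * ‖∫ ζ, v ζ * v (ξ - ζ)‖ₑ ≤ ENNReal.ofReal (2 * 2 ^ r) *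
      ∫⁻ ζ, ‖v ζ‖ₑ * (sobolevWeight r (ξ - ζ) * ‖v (ξ - ζ)‖ₑ) := by
  have hsub : Measurable fun ζ ↦ ξ - ζ := measurable_const.sub measurable_id
  have hmeas : Measurable fun ζ ↦ sobolevWeight r ζ * ‖v ζ‖ₑ * ‖v (ξ - ζ)‖ₑ :=
    ((measurable_sobolevWeight r).mul hv.enorm).mul (hv.comp hsub).enorm
  have hsymm : ∫⁻ ζ, sobolevWeight r ζ * ‖v ζ‖ₑ * ‖v (ξ - ζ)‖ₑ =
      ∫⁻ ζ, ‖v ζ‖ₑ * (sobolevWeight r (ξ - ζ) * ‖v (ξ - ζ)‖ₑ) := by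
    rw [← lintegral_sub_left_eq_self _ ξ]
    simp only [sub_sub_cancel, mul_comm]
  calc sobolevWeight r ξ * ‖∫ ζ, v ζ * v (ξ - ζ)‖ₑ
      ≤ sobolevWeight r ξ * ∫⁻ ζ, ‖v ζ‖ₑ * ‖v (ξ - ζ)‖ₑ := by
        gcongr
        refine (enorm_integral_le_lintegral_enorm _).trans_eq ?_
        simp_rw [enorm_mul]
    _ = ∫⁻ ζ, sobolevWeight r (ζ + (ξ - ζ)) * (‖v ζ‖ₑ * ‖v (ξ - ζ)‖ₑ) := by
        simp_rw [add_sub_cancel]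
        exact (lintegral_const_mul _ (hv.enorm.mul (hv.comp hsub).enorm)).symm
    _ ≤ ∫⁻ ζ, ENNReal.ofReal (2 ^ r) * (sobolevWeight r ζ * ‖v ζ‖ₑ * ‖v (ξ - ζ)‖ₑ +
          ‖v ζ‖ₑ * (sobolevWeight r (ξ - ζ) * ‖v (ξ - ζ)‖ₑ)) := by
        refine lintegral_mono fun ζ ↦ ?_
        refine (mul_le_mul_left (sobolevWeight_add_le hr _ _) _).trans_eq ?_
        ring
    _ = _ := by
        rw [lintegral_const_mul' _ _ ENNReal.ofReal_ne_top, lintegral_add_left hmeas, hsymm,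
          ← two_mul, ← mul_assoc, ENNReal.ofReal_mul zero_le_two, ENNReal.ofReal_ofNat, mul_comm 2]

/-- The constant in the algebra property of `H^r`. -/
def sobolevAlgebraConst (r : ℝ) : ℝ≥0∞ :=
  ENNReal.ofReal (2 * 2 ^ r) ^ 2 * sobolevEmbeddingConst r

lemma sobolevEnergy_convolution_le {r : ℝ} (hr : 0 ≤ r) {v : ℝ → ℂ} (hv : Measurable v) :
    sobolevEnergy r (fun ξ ↦ ∫ ζ, v ζ * v (ξ - ζ)) ≤
      sobolevAlgebraConst r * sobolevEnergy r v ^ 2 := by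
  calc sobolevEnergy r (fun ξ ↦ ∫ ζ, v ζ * v (ξ - ζ))
      ≤ ∫⁻ ξ, (ENNReal.ofReal (2 * 2 ^ r) *
          ∫⁻ ζ, ‖v ζ‖ₑ * (sobolevWeight r (ξ - ζ) * ‖v (ξ - ζ)‖ₑ)) ^ 2 :=
        lintegral_mono fun ξ ↦
          pow_le_pow_left₀ zero_le (sobolevWeight_mul_enorm_convolution_le hr hv ξ) 2
    _ ≤ ENNReal.ofReal (2 * 2 ^ r) ^ 2 * ((∫⁻ ξ, ‖v ξ‖ₑ) ^ 2 * sobolevEnergy r v) := by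
        simp_rw [mul_pow]
        rw [lintegral_const_mul' _ _ (ENNReal.pow_ne_top ENNReal.ofReal_ne_top)]
        gcongr
        have hw : Measurable fun ξ ↦ sobolevWeight r ξ * ‖v ξ‖ₑ :=
          (measurable_sobolevWeight r).mul hv.enorm
        exact lintegral_sq_lintegral_mul_sub_le hv.enorm hw
    _ ≤ ENNReal.ofReal (2 * 2 ^ r) ^ 2 *
          (sobolevEmbeddingConst r * sobolevEnergy r v * sobolevEnergy r v) := by
        gcongr
        exact sq_lintegral_enorm_le r hv
    _ = _ := by
        rw [sobolevAlgebraConst]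
        ring

end Sobolev

section Scales

variable {μ T N : ℝ}

/-- The factor in front of `‖η‖_{H^r}` when the time interval is cut optimally. -/
def linearScale (μ T : ℝ) : ℝ := μ ^ (-(1 : ℝ) / 5) * T ^ ((3 : ℝ) / 10)

/-- A bound for frequency times step length when the time interval is cut optimally; it measures the
loss of the derivative in the Duhamel term. -/
def stepScale (μ T : ℝ) : ℝ := μ ^ (-(1 : ℝ) / 5) * T ^ ((4 : ℝ) / 5)

lemma linearScale_pos (hμ : 0 < μ) (hT : 0 < T) : 0 < linearScale μ T := by
  unfold linearScale
  positivity

lemma stepScale_pos (hμ : 0 < μ) (hT : 0 < T) : 0 < stepScale μ T := by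
  unfold stepScale
  positivity

lemma linearScale_sq (hμ : 0 < μ) (hT : 0 < T) :
    linearScale μ T ^ 2 = √((T * μ) ^ ((1 : ℝ) / 5) * T / μ) := by
  have hμ5 : μ ^ ((1 : ℝ) / 5) / μ = μ ^ (-(4 : ℝ) / 5) := by
    rw [← Real.rpow_sub_one hμ.ne']
    norm_num
  have hT5 : T ^ ((1 : ℝ) / 5) * T = T ^ ((6 : ℝ) / 5) := by
    rw [← Real.rpow_add_one hT.ne']
    norm_num
  symm
  rw [Real.sqrt_eq_iff_eq_sq (by positivity) (by positivity), linearScale, ← pow_mul, mul_pow,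
    ← Real.rpow_mul_natCast hμ.le, ← Real.rpow_mul_natCast hT.le]
  calc (T * μ) ^ ((1 : ℝ) / 5) * T / μ
      = μ ^ ((1 : ℝ) / 5) / μ * (T ^ ((1 : ℝ) / 5) * T) := by
        rw [Real.mul_rpow hT.le hμ.le]
        ring
    _ = _ := by
        rw [hμ5, hT5]
        norm_num

lemma rpow_mul_stepScale (hμ : 0 < μ) (hT : 0 < T) :
    (T * μ) ^ ((1 : ℝ) / 5) * stepScale μ T = T := by
  calc (T * μ) ^ ((1 : ℝ) / 5) * stepScale μ T
      = μ ^ ((1 : ℝ) / 5) * μ ^ (-(1 : ℝ) / 5) * (T ^ ((1 : ℝ) / 5) * T ^ ((4 : ℝ) / 5)) := by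
        rw [stepScale, Real.mul_rpow hT.le hμ.le]
        ring
    _ = T := by
        rw [← Real.rpow_add hμ, ← Real.rpow_add hT]
        norm_num

lemma mul_sqrt_div_div_sqrt_le {n m L Λ : ℝ} (hn : 0 < n) (hm : 0 < m) (hL : 0 < L) (hΛ : 0 < Λ)
    (hnm : n ≤ 2 * (m * L)) (hμ : 0 < μ) (hT : 0 < T) :
    n * (2 * (640 * √(T / n) / √(μ * Λ))) ≤ 2000 * √(L / Λ) * √(m * T / μ) := by
  have hle : n * T / (μ * Λ) ≤ (3 / 2) ^ 2 * (L / Λ * (m * T / μ)) := calc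
    n * T / (μ * Λ) ≤ 9 / 4 * (m * L) * T / (μ * Λ) := by
      gcongr
      linarith [mul_pos hm hL]
    _ = _ := by
      field_simp
      norm_num
  calc n * (2 * (640 * √(T / n) / √(μ * Λ))) = 1280 * (√(n ^ 2) * √(T / n) / √(μ * Λ)) := by
        rw [Real.sqrt_sq hn.le]
        ring
    _ = 1280 * √(n * T / (μ * Λ)) := by
        rw [← Real.sqrt_mul (sq_nonneg n), ← Real.sqrt_div (by positivity)]
        field_simp
    _ ≤ 1280 * √((3 / 2) ^ 2 * (L / Λ * (m * T / μ))) := by gcongr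
    _ = 1920 * (√(L / Λ) * √(m * T / μ)) := by
        rw [Real.sqrt_mul (by positivity), Real.sqrt_sq (by norm_num),
          Real.sqrt_mul (by positivity)]
        ring
    _ ≤ 2000 * √(L / Λ) * √(m * T / μ) := by
        rw [mul_assoc]
        gcongr
        norm_num

/-- The optimal number of time steps at frequency `N` is of order `(T μ) ^ (1 / 5) * max N 1`. -/
lemma exists_nat_mul_localStrichartzConst_le (hμ : 0 < μ) (hT : 0 < T) (hN : 0 < N)
    (hTμ : 1 ≤ T * μ) :
    ∃ n : ℕ, 0 < n ∧
      n * (2 * localStrichartzConst μ N (T / n)) ≤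
        ENNReal.ofReal (2000 * √(max N 1 / curvatureSize N) * linearScale μ T ^ 2) ∧
      T / n * N ≤ stepScale μ T := by
  set m := (T * μ) ^ ((1 : ℝ) / 5)
  have hm : 1 ≤ m := Real.one_le_rpow hTμ (by norm_num)
  have hL : 1 ≤ max N 1 := le_max_right _ _
  have hmL : 1 ≤ m * max N 1 := one_le_mul_of_one_le_of_one_le hm hL
  have hn : 0 < ⌈m * max N 1⌉₊ := Nat.ceil_pos.2 (by linarith)
  have hle : m * max N 1 ≤ ⌈m * max N 1⌉₊ := Nat.le_ceil _
  have hge : (⌈m * max N 1⌉₊ : ℝ) ≤ 2 * (m * max N 1) := by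
    linarith [Nat.ceil_lt_add_one (zero_le_one.trans hmL)]
  have hn' : (0 : ℝ) < ⌈m * max N 1⌉₊ := Nat.cast_pos.2 hn
  generalize ⌈m * max N 1⌉₊ = n at hn hle hge hn'
  refine ⟨n, hn, ?_, ?_⟩
  · rw [localStrichartzConst, ← ENNReal.ofReal_ofNat 2, ← ENNReal.ofReal_natCast,
      ← ENNReal.ofReal_mul zero_le_two, ← ENNReal.ofReal_mul hn'.le, linearScale_sq hμ hT]
    exact ENNReal.ofReal_le_ofReal <| mul_sqrt_div_div_sqrt_le hn' (by linarith) (by linarith)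
      (curvatureSize_pos hN) hge hμ hT
  · have hscale := stepScale_pos hμ hT
    rw [div_mul_eq_mul_div, div_le_iff₀ hn']
    calc T * N = m * N * stepScale μ T := by
          rw [mul_right_comm, rpow_mul_stepScale hμ hT]
      _ ≤ n * stepScale μ T := by
          gcongr
          exact (mul_le_mul_of_nonneg_left (le_max_left N 1) (by linarith)).trans hle
      _ = _ := mul_comm _ _

lemma curvatureSize_of_one_le (hN : 1 ≤ N) : curvatureSize N = N ^ (-(3 : ℝ) / 2) := by
  have hN0 : 0 < N := one_pos.trans_le hN
  have hprod : N * √N = N ^ ((3 : ℝ) / 2) := by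
    rw [Real.sqrt_eq_rpow, ← Real.rpow_one_add' hN0.le (by norm_num)]
    norm_num
  have hle : 1 / (N * √N) ≤ N :=
    (div_le_one_of_le₀ (one_le_mul_of_one_le_of_one_le hN (Real.one_le_sqrt.2 hN))
      (by positivity)).trans hN
  rw [curvatureSize, min_eq_right hle, hprod, one_div, ← Real.rpow_neg hN0.le, neg_div]

lemma curvatureSize_of_le_one (hN : 0 < N) (hN1 : N ≤ 1) : curvatureSize N = N := by
  refine min_eq_left ((le_div_iff₀ (by positivity)).2 ?_)
  exact mul_le_one₀ hN1 (by positivity) (mul_le_one₀ hN1 (by positivity) (Real.sqrt_le_one.2 hN1))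

lemma sqrt_mul_sq_le_of_one_le {r δ : ℝ} (hδ : δ ≤ r - 13 / 8) (hN : 1 ≤ N) :
    √(N / curvatureSize N) * (N * N ^ (-r)) ^ 2 ≤ (N ^ (-δ)) ^ 2 := by
  have hN0 : 0 < N := one_pos.trans_le hN
  have hprod : N * N ^ (-r) = N ^ (1 - r) := by
    rw [Real.rpow_neg hN0.le, Real.rpow_sub hN0, Real.rpow_one, div_eq_mul_inv]
  calc √(N / curvatureSize N) * (N * N ^ (-r)) ^ 2
      = N ^ ((5 : ℝ) / 4) * N ^ (2 * (1 - r)) := by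
        rw [curvatureSize_of_one_le hN, ← Real.rpow_one_sub' hN0.le (by norm_num),
          Real.sqrt_eq_rpow, ← Real.rpow_mul hN0.le, hprod, ← Real.rpow_mul_natCast hN0.le]
        norm_num [mul_comm]
    _ = N ^ (5 / 4 + 2 * (1 - r)) := (Real.rpow_add hN0 _ _).symm
    _ ≤ N ^ (-δ * (2 : ℕ)) := Real.rpow_le_rpow_of_exponent_le hN (by push_cast; linarith)
    _ = _ := Real.rpow_mul_natCast hN0.le _ _

lemma sqrt_mul_sq_le_of_le_one {δ : ℝ} (hδ : δ ≤ 3 / 4) (hN : 0 < N) (hN1 : N ≤ 1) :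
    √(1 / curvatureSize N) * N ^ 2 ≤ (N ^ δ) ^ 2 := by
  calc √(1 / curvatureSize N) * N ^ 2 = N ^ ((3 : ℝ) / 2) := by
        rw [curvatureSize_of_le_one hN hN1, one_div, Real.sqrt_inv, Real.sqrt_eq_rpow,
          ← Real.rpow_neg hN.le, ← Real.rpow_natCast, ← Real.rpow_add hN]
        norm_num
    _ ≤ N ^ (δ * (2 : ℕ)) := Real.rpow_le_rpow_of_exponent_ge hN hN1 (by push_cast; linarith)
    _ = _ := Real.rpow_mul_natCast hN.le _ _

/-- The ratio of the geometric decay of the dyadic pieces away from frequency one. -/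
def blockRatio (r : ℝ) : ℝ := 2 ^ (-min (r - 13 / 8) (3 / 4))

/-- The decay of the piece of `∂ₓη` at frequency `2 ^ k`. -/
def blockWeight (r : ℝ) (k : ℤ) : ℝ≥0∞ := ENNReal.ofReal (blockRatio r ^ k.natAbs)

lemma blockRatio_pos (r : ℝ) : 0 < blockRatio r := Real.rpow_pos_of_pos two_pos _

lemma blockRatio_lt_one {r : ℝ} (hr : 13 / 8 < r) : blockRatio r < 1 :=
  Real.rpow_lt_one_of_one_lt_of_neg one_lt_two <|
    neg_lt_zero.2 (lt_min (sub_pos.2 hr) (by norm_num))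

lemma blockRatio_pow_natAbs (r : ℝ) (k : ℤ) :
    blockRatio r ^ k.natAbs = (2 : ℝ) ^ (-min (r - 13 / 8) (3 / 4) * |(k : ℝ)|) := by
  rw [blockRatio, ← Real.rpow_mul_natCast zero_le_two, Nat.cast_natAbs, Int.cast_abs]

lemma sqrt_mul_sq_le_blockRatio_pow (r : ℝ) (k : ℤ) :
    √(max (2 ^ k) 1 / curvatureSize (2 ^ k)) * ((2 : ℝ) ^ k * max (2 ^ k) 1 ^ (-r)) ^ 2 ≤
      (blockRatio r ^ k.natAbs) ^ 2 := by
  have hrpow (a : ℝ) : ((2 : ℝ) ^ k) ^ a = 2 ^ (k * a) := by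
    rw [Real.rpow_mul zero_le_two, Real.rpow_intCast]
  rw [blockRatio_pow_natAbs]
  rcases le_total 0 k with hk | hk
  · have hN : 1 ≤ (2 : ℝ) ^ k := one_le_zpow₀ one_le_two hk
    rw [max_eq_left hN]
    refine (sqrt_mul_sq_le_of_one_le (min_le_left _ (3 / 4)) hN).trans_eq ?_
    rw [hrpow, abs_of_nonneg (Int.cast_nonneg hk), mul_comm]
  · have hN : (2 : ℝ) ^ k ≤ 1 := zpow_le_one_of_nonpos₀ one_le_two hk
    rw [max_eq_right hN, Real.one_rpow, mul_one]
    refine (sqrt_mul_sq_le_of_le_one (min_le_right (r - 13 / 8) _) (by positivity) hN).trans_eq ?_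
    rw [hrpow, abs_of_nonpos (Int.cast_nonpos.2 hk), neg_mul_neg, mul_comm]

lemma tsum_blockWeight_lt_top {r : ℝ} (hr : 13 / 8 < r) : ∑' k, blockWeight r k < ⊤ := by
  have hgeom := summable_geometric_of_lt_one (blockRatio_pos r).le (blockRatio_lt_one hr)
  refine Summable.tsum_ofReal_lt_top (.of_nat_of_neg ?_ ?_) <;>
    simpa only [Int.natAbs_neg, Int.natAbs_natCast] using hgeom

lemma blockWeight_ne_zero (r : ℝ) (k : ℤ) : blockWeight r k ≠ 0 :=
  (ENNReal.ofReal_pos.2 (pow_pos (blockRatio_pos r) _)).ne'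

lemma blockWeight_ne_top (r : ℝ) (k : ℤ) : blockWeight r k ≠ ⊤ := ENNReal.ofReal_ne_top

lemma sq_tsum_le_tsum_mul_tsum {ι : Type*} [Countable ι] (w a : ι → ℝ≥0∞) (hw : ∀ i, w i ≠ 0)
    (hw' : ∀ i, w i ≠ ⊤) :
    (∑' i, a i) ^ 2 ≤ (∑' i, w i) * ∑' i, (w i)⁻¹ * a i ^ 2 := by
  let : MeasurableSpace ι := ⊤
  have := sq_lintegral_mul_le (μ := Measure.count) (f := fun i ↦ w i ^ ((1 : ℝ) / 2))
    (g := fun i ↦ (w i)⁻¹ ^ ((1 : ℝ) / 2) * a i) (measurable_of_countable _).aemeasurable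
    (measurable_of_countable _).aemeasurable
  simp only [lintegral_count, mul_pow, rpow_half_sq, ← mul_assoc] at this
  refine le_trans (le_of_eq ?_) this
  congr! 3 with i
  rw [← ENNReal.mul_rpow_of_nonneg _ _ (by norm_num), ENNReal.mul_inv_cancel (hw i) (hw' i),
    ENNReal.one_rpow, one_mul]

end Scales

section DyadicDecomposition

lemma pairwise_disjoint_dyadicShell_zpow :
    Pairwise (Function.onFun Disjoint fun k : ℤ ↦ dyadicShell (2 ^ k)) := by
  refine (pairwise_disjoint_on _).2 fun j k hjk ↦ Set.disjoint_left.2 fun ξ hj hk ↦ ?_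
  have hle : (2 : ℝ) ^ (j + 1) ≤ 2 ^ k := zpow_le_zpow_right₀ one_le_two hjk
  rw [zpow_add_one₀ two_ne_zero, mul_comm] at hle
  exact absurd (hj.2.trans_le (hle.trans hk.1)) (lt_irrefl _)

lemma exists_mem_dyadicShell_zpow {ξ : ℝ} (hξ : ξ ≠ 0) : ∃ k : ℤ, ξ ∈ dyadicShell (2 ^ k) := by
  obtain ⟨k, hk⟩ := exists_mem_Ico_zpow (abs_pos.2 hξ) (one_lt_two (α := ℝ))
  rw [zpow_add_one₀ two_ne_zero, mul_comm] at hk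
  exact ⟨k, hk⟩

lemma enorm_integral_le_tsum_dyadicShell {E : Type*} [NormedAddCommGroup E] [NormedSpace ℝ E]
    {f : ℝ → E} (hf : Integrable f) :
    ‖∫ ξ, f ξ‖ₑ ≤ ∑' k : ℤ, ‖∫ ξ in dyadicShell (2 ^ k), f ξ‖ₑ := by
  have hunion : volume.restrict (⋃ k : ℤ, dyadicShell (2 ^ k)) = (volume : Measure ℝ) := by
    refine Measure.restrict_eq_self_of_ae_mem ?_
    filter_upwards [volume.ae_ne 0] with ξ hξ
    exact Set.mem_iUnion.2 (exists_mem_dyadicShell_zpow hξ)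
  have hsum := hasSum_integral_iUnion (fun k : ℤ ↦ measurableSet_dyadicShell (2 ^ k))
    pairwise_disjoint_dyadicShell_zpow hf.integrableOn
  rw [hunion] at hsum
  rw [← hsum.tsum_eq]
  exact enorm_tsum_le_tsum_enorm

lemma setLIntegral_dyadicShell_sq_le {r N b : ℝ} (hr : 0 ≤ r) {f g : ℝ → ℂ}
    (hfg : ∀ ξ ∈ dyadicShell N, ‖f ξ‖ ≤ b * ‖g ξ‖) (hb : 0 ≤ b) :
    ∫⁻ ξ in dyadicShell N, ‖f ξ‖ₑ ^ 2 ≤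
      ENNReal.ofReal (b * max N 1 ^ (-r)) ^ 2 * sobolevEnergy r g := by
  have hL : 0 < max N 1 := lt_max_of_lt_right one_pos
  have hpt : ∀ ξ ∈ dyadicShell N,
      ‖f ξ‖ₑ ≤ ENNReal.ofReal (b * max N 1 ^ (-r)) * (sobolevWeight r ξ * ‖g ξ‖ₑ) := fun ξ hξ ↦ by
    have hjap : 1 ≤ max N 1 ^ (-r) * jap ξ ^ r := by
      rw [Real.rpow_neg hL.le, inv_mul_eq_div, one_le_div (by positivity)]
      exact Real.rpow_le_rpow hL.le (max_le (hξ.1.trans (abs_le_jap ξ)) (one_le_jap ξ)) hr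
    rw [sobolevWeight, ← ofReal_norm, ← ofReal_norm,
      ← ENNReal.ofReal_mul (Real.rpow_nonneg (jap_pos ξ).le _),
      ← ENNReal.ofReal_mul (by positivity)]
    refine ENNReal.ofReal_le_ofReal ?_
    calc ‖f ξ‖ ≤ b * ‖g ξ‖ := hfg ξ hξ
      _ ≤ b * ‖g ξ‖ * (max N 1 ^ (-r) * jap ξ ^ r) := le_mul_of_one_le_right (by positivity) hjap
      _ = _ := by ring
  calc ∫⁻ ξ in dyadicShell N, ‖f ξ‖ₑ ^ 2
      ≤ ∫⁻ ξ in dyadicShell N,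
          ENNReal.ofReal (b * max N 1 ^ (-r)) ^ 2 * (sobolevWeight r ξ * ‖g ξ‖ₑ) ^ 2 :=
        setLIntegral_mono' (measurableSet_dyadicShell N) fun ξ hξ ↦
          (pow_le_pow_left₀ zero_le (hpt ξ hξ) 2).trans_eq (mul_pow _ _ _)
    _ ≤ ∫⁻ ξ, ENNReal.ofReal (b * max N 1 ^ (-r)) ^ 2 * (sobolevWeight r ξ * ‖g ξ‖ₑ) ^ 2 :=
        setLIntegral_le_lintegral _ _
    _ = _ := lintegral_const_mul' _ _ (ENNReal.pow_ne_top ENNReal.ofReal_ne_top)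

end DyadicDecomposition

section MeasurableSelection

open TopologicalSpace

variable {α X : Type*} [TopologicalSpace X] [SeparableSpace X] [Nonempty X]

/-- The point at which `f t` is largest among the first `n + 1` points of a dense sequence. -/
def denseMaximizer (f : α → X → ℝ≥0∞) : ℕ → α → X
  | 0, _ => denseSeq X 0
  | n + 1, t => if f t (denseMaximizer f n t) < f t (denseSeq X (n + 1)) then
      denseSeq X (n + 1) else denseMaximizer f n t

lemma denseSeq_le_denseMaximizer (f : α → X → ℝ≥0∞) (n : ℕ) (t : α) :
    f t (denseSeq X n) ≤ f t (denseMaximizer f n t) := by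
  cases n with
  | zero => exact le_rfl
  | succ n =>
    rw [denseMaximizer]
    split_ifs with hlt
    exacts [le_rfl, not_lt.1 hlt]

lemma monotone_denseMaximizer (f : α → X → ℝ≥0∞) (t : α) :
    Monotone fun n ↦ f t (denseMaximizer f n t) := by
  refine monotone_nat_of_le_succ fun n ↦ ?_
  rw [denseMaximizer]
  split_ifs with hlt
  exacts [hlt.le, le_rfl]

variable [MeasurableSpace α] [MeasurableSpace X]

lemma measurable_denseMaximizer {f : α → X → ℝ≥0∞} (hf : Measurable (Function.uncurry f)) (n : ℕ) :
    Measurable (denseMaximizer f n) := by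
  induction n with
  | zero => exact measurable_const
  | succ n ih =>
    exact Measurable.ite (measurableSet_lt (hf.comp (measurable_id.prodMk ih))
      (hf.comp (measurable_id.prodMk measurable_const))) measurable_const ih

/-- Linearization of a maximal function. -/
lemma lintegral_iSup_le_of_forall_measurable {ν : Measure α} {f : α → X → ℝ≥0∞}
    (hf : Measurable (Function.uncurry f)) (hft : ∀ t, LowerSemicontinuous (f t)) {R : ℝ≥0∞}
    (hR : ∀ x : α → X, Measurable x → ∫⁻ t, f t (x t) ∂ν ≤ R) : ∫⁻ t, ⨆ y, f t y ∂ν ≤ R := by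
  have hsup : ∀ t, ⨆ y, f t y ≤ ⨆ n, f t (denseMaximizer f n t) := fun t ↦ iSup_le fun y ↦ by
    have hclosed := (hft t).isClosed_preimage (⨆ n, f t (denseMaximizer f n t))
    refine hclosed.closure_subset_iff.2 ?_ ((denseRange_denseSeq X).closure_range ▸ Set.mem_univ y)
    rintro _ ⟨n, rfl⟩
    exact (denseSeq_le_denseMaximizer f n t).trans
      (le_iSup (fun n ↦ f t (denseMaximizer f n t)) n)
  have hmeas : ∀ n, Measurable fun t ↦ f t (denseMaximizer f n t) := fun n ↦
    hf.comp (measurable_id.prodMk (measurable_denseMaximizer hf n))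
  refine (lintegral_mono hsup).trans ?_
  rw [lintegral_iSup hmeas fun m n hmn t ↦ monotone_denseMaximizer f t hmn]
  exact iSup_le fun n ↦ hR _ (measurable_denseMaximizer hf n)

lemma eLpNorm_top_sq_le_iSup {Y E : Type*} [MeasurableSpace Y] [Nonempty Y] [NormedAddCommGroup E]
    (ν : Measure Y) (f : Y → E) : eLpNorm f ⊤ ν ^ 2 ≤ ⨆ y, ‖f y‖ₑ ^ 2 := by
  rw [← ENNReal.iSup_pow, eLpNorm_exponent_top]
  exact pow_le_pow_left₀ zero_le
    (essSup_le_of_ae_le _ (.of_forall fun y ↦ le_iSup (fun y ↦ ‖f y‖ₑ) y)) 2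

end MeasurableSelection

section FrequencyBlocks

variable {r ε μ T : ℝ} {u : ℝ → 𝓢(ℝ, ℂ)} {S : ℝ≥0∞}

lemma sobolevEnergy_fourier (r : ℝ) (f : 𝓢(ℝ, ℂ)) :
    sobolevEnergy r (𝓕 f : 𝓢(ℝ, ℂ)) = HsNorm r f ^ 2 := by
  rw [HsNorm_sq, SchwartzMap.fourier_coe]

lemma sobolevEnergy_fourier_schwartzSq_le (hr : 0 ≤ r) (f : 𝓢(ℝ, ℂ)) :
    sobolevEnergy r (𝓕 (schwartzSq f) : 𝓢(ℝ, ℂ)) ≤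
      sobolevAlgebraConst r * (HsNorm r f ^ 2) ^ 2 := by
  rw [← sobolevEnergy_fourier, funext (fourier_schwartzSq f)]
  exact sobolevEnergy_convolution_le hr (𝓕 f : 𝓢(ℝ, ℂ)).continuous.measurable

lemma norm_fourier_derivCLM (f : 𝓢(ℝ, ℂ)) (ξ : ℝ) :
    ‖𝓕 (derivCLM ℂ ℂ f) ξ‖ = 2 * Real.pi * |ξ| * ‖𝓕 f ξ‖ := by
  rw [fourier_derivCLM]
  simp [abs_of_pos Real.pi_pos]

lemma lintegral_dyadicShell_fourier_derivCLM_sq_le {N : ℝ} (hr : 0 ≤ r) (hN : 0 < N)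
    (f : 𝓢(ℝ, ℂ)) :
    ∫⁻ ξ in dyadicShell N, ‖𝓕 (derivCLM ℂ ℂ f) ξ‖ₑ ^ 2 ≤
      ENNReal.ofReal (4 * Real.pi * N * max N 1 ^ (-r)) ^ 2 *
        sobolevEnergy r (𝓕 f : 𝓢(ℝ, ℂ)) := by
  refine setLIntegral_dyadicShell_sq_le hr (fun ξ hξ ↦ ?_) (by positivity)
  rw [norm_fourier_derivCLM]
  refine mul_le_mul_of_nonneg_right ?_ (norm_nonneg _)
  linarith [mul_le_mul_of_nonneg_left hξ.2.le Real.two_pi_pos.le]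

lemma lintegral_dyadicShell_nonlinearity_sq_le {N : ℝ} (ε : ℝ) (hr : 0 ≤ r) (hN : 0 < N)
    (f : 𝓢(ℝ, ℂ)) :
    ∫⁻ ξ in dyadicShell N, ‖-(ε / 2 : ℂ) * 𝓕 (derivCLM ℂ ℂ (derivCLM ℂ ℂ f)) ξ‖ₑ ^ 2 ≤
      ENNReal.ofReal (8 * Real.pi ^ 2 * |ε| * N ^ 2 * max N 1 ^ (-r)) ^ 2 *
        sobolevEnergy r (𝓕 f : 𝓢(ℝ, ℂ)) := by
  refine setLIntegral_dyadicShell_sq_le hr (fun ξ hξ ↦ ?_) (by positivity)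
  have hnorm : ‖-(ε / 2 : ℂ) * 𝓕 (derivCLM ℂ ℂ (derivCLM ℂ ℂ f)) ξ‖ =
      2 * Real.pi ^ 2 * |ε| * |ξ| ^ 2 * ‖𝓕 f ξ‖ := by
    rw [norm_mul, norm_fourier_derivCLM, norm_fourier_derivCLM, norm_neg, norm_div,
      Complex.norm_real, Real.norm_eq_abs, Complex.norm_ofNat]
    ring
  rw [hnorm]
  refine mul_le_mul_of_nonneg_right ?_ (norm_nonneg _)
  calc 2 * Real.pi ^ 2 * |ε| * |ξ| ^ 2 ≤ 2 * Real.pi ^ 2 * |ε| * (2 * N) ^ 2 := by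
        gcongr
        exact hξ.2.le
    _ = _ := by ring

lemma IsMildSolution.mul_left {s : Set ℝ} {v F : ℝ → ℝ → ℂ} (h : IsMildSolution μ s v F)
    (m : ℝ → ℂ) : IsMildSolution μ s (fun t ξ ↦ m ξ * v t ξ) (fun t ξ ↦ m ξ * F t ξ) := by
  intro a ha t ht hat ξ
  simp only [mul_left_comm _ (m ξ), intervalIntegral.integral_const_mul, ← mul_add]
  rw [← h a ha t ht hat ξ]

lemma IsWhithamSolution.isMildSolution_deriv (h : IsWhithamSolution ε μ T u) (hμ : 0 < μ)
    (hu : Continuous u) :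
    IsMildSolution μ (Set.Icc 0 T) (fun t ↦ (𝓕 (derivCLM ℂ ℂ (u t)) : 𝓢(ℝ, ℂ)))
      (fun t ξ ↦ -(ε / 2 : ℂ) * 𝓕 (derivCLM ℂ ℂ (derivCLM ℂ ℂ (schwartzSq (u t)))) ξ) := by
  convert (h.isMildSolution hμ hu).mul_left fun ξ ↦ 2 * Real.pi * Complex.I * ξ using 3 with t ξ t ξ
  · exact fourier_derivCLM (u t) ξ
  · rw [fourier_derivCLM (derivCLM ℂ ℂ (schwartzSq (u t))), mul_left_comm]

/-- The bound for the square of `‖∂ₓη‖_{L²_T L^∞}`, up to the sum over frequencies, in terms of the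
supremum `S` of the `H^r` norm. -/
def strichartzBound (r ε μ T : ℝ) (S : ℝ≥0∞) : ℝ≥0∞ :=
  ENNReal.ofReal 2000 * ENNReal.ofReal (linearScale μ T) ^ 2 *
    (ENNReal.ofReal (4 * Real.pi) ^ 2 * S ^ 2 +
      ENNReal.ofReal (8 * Real.pi ^ 2 * (|ε| * stepScale μ T)) ^ 2 *
        (sobolevAlgebraConst r * (S ^ 2) ^ 2))

lemma ofReal_mul_ofReal_sq_le_blockWeight_sq (r : ℝ) (k : ℤ) (hμ : 0 < μ) (hT : 0 < T) :
    ENNReal.ofReal (2000 * √(max (2 ^ k) 1 / curvatureSize (2 ^ k)) * linearScale μ T ^ 2) *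
        ENNReal.ofReal (2 ^ k * max (2 ^ k) 1 ^ (-r)) ^ 2 ≤
      blockWeight r k ^ 2 * (ENNReal.ofReal 2000 * ENNReal.ofReal (linearScale μ T) ^ 2) := by
  have : 0 < max ((2 : ℝ) ^ k) 1 := lt_max_of_lt_right one_pos
  have hscale := linearScale_pos hμ hT
  have hratio := blockRatio_pos r
  rw [blockWeight, ← ENNReal.ofReal_pow (by positivity), ← ENNReal.ofReal_pow (by positivity),
    ← ENNReal.ofReal_pow hscale.le, ← ENNReal.ofReal_mul (by positivity),
    ← ENNReal.ofReal_mul (by positivity), ← ENNReal.ofReal_mul (by positivity)]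
  refine ENNReal.ofReal_le_ofReal ?_
  calc _ = √(max (2 ^ k) 1 / curvatureSize (2 ^ k)) * (2 ^ k * max (2 ^ k) 1 ^ (-r)) ^ 2 *
        (2000 * linearScale μ T ^ 2) := by ring
    _ ≤ _ := mul_le_mul_of_nonneg_right (sqrt_mul_sq_le_blockRatio_pow r k) (by positivity)

lemma nat_mul_two_mul_le_blockWeight_sq_mul_strichartzBound {n : ℕ} {k : ℤ} {M : ℝ≥0∞}
    (hμ : 0 < μ) (hT : 0 < T)
    (hM : n * (2 * M) ≤
      ENNReal.ofReal (2000 * √(max (2 ^ k) 1 / curvatureSize (2 ^ k)) * linearScale μ T ^ 2))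
    (hstep : T / n * 2 ^ k ≤ stepScale μ T) :
    n * (2 * (M *
      (ENNReal.ofReal (4 * Real.pi * 2 ^ k * max (2 ^ k) 1 ^ (-r)) ^ 2 * S ^ 2 +
        ENNReal.ofReal (T / n) ^ 2 *
          (ENNReal.ofReal (8 * Real.pi ^ 2 * |ε| * (2 ^ k) ^ 2 * max (2 ^ k) 1 ^ (-r)) ^ 2 *
            (sobolevAlgebraConst r * (S ^ 2) ^ 2))))) ≤
      blockWeight r k ^ 2 * strichartzBound r ε μ T S := by
  have hweight := ofReal_mul_ofReal_sq_le_blockWeight_sq r k hμ hT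
  set N : ℝ := 2 ^ k
  set z := N * max N 1 ^ (-r)
  have hz : 0 ≤ z := by positivity
  set Y := sobolevAlgebraConst r * (S ^ 2) ^ 2
  set b := ENNReal.ofReal (8 * Real.pi ^ 2 * (|ε| * stepScale μ T))
  have hlin : ENNReal.ofReal (4 * Real.pi * N * max N 1 ^ (-r)) =
      ENNReal.ofReal z * ENNReal.ofReal (4 * Real.pi) := by
    rw [← ENNReal.ofReal_mul hz]
    congr 1
    ring
  have hnonlin : ENNReal.ofReal (T / n) *
      ENNReal.ofReal (8 * Real.pi ^ 2 * |ε| * N ^ 2 * max N 1 ^ (-r)) ≤ ENNReal.ofReal z * b := by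
    rw [← ENNReal.ofReal_mul hz, ← ENNReal.ofReal_mul (by positivity)]
    refine ENNReal.ofReal_le_ofReal ?_
    calc _ = z * (8 * Real.pi ^ 2 * (|ε| * (T / n * N))) := by ring
      _ ≤ _ := by gcongr
  calc _ = n * (2 * M) * (ENNReal.ofReal (4 * Real.pi * N * max N 1 ^ (-r)) ^ 2 * S ^ 2 +
        (ENNReal.ofReal (T / n) *
          ENNReal.ofReal (8 * Real.pi ^ 2 * |ε| * N ^ 2 * max N 1 ^ (-r))) ^ 2 * Y) := by ring
    _ ≤ ENNReal.ofReal (2000 * √(max N 1 / curvatureSize N) * linearScale μ T ^ 2) *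
        ((ENNReal.ofReal z * ENNReal.ofReal (4 * Real.pi)) ^ 2 * S ^ 2 +
          (ENNReal.ofReal z * b) ^ 2 * Y) := by
        rw [hlin]
        gcongr
    _ = ENNReal.ofReal (2000 * √(max N 1 / curvatureSize N) * linearScale μ T ^ 2) *
        ENNReal.ofReal z ^ 2 * (ENNReal.ofReal (4 * Real.pi) ^ 2 * S ^ 2 + b ^ 2 * Y) := by ring
    _ ≤ blockWeight r k ^ 2 * (ENNReal.ofReal 2000 * ENNReal.ofReal (linearScale μ T) ^ 2) *
        (ENNReal.ofReal (4 * Real.pi) ^ 2 * S ^ 2 + b ^ 2 * Y) := by gcongr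
    _ = _ := mul_assoc _ _ _

lemma IsWhithamSolution.lintegral_enorm_dyadicShell_sq_le (h : IsWhithamSolution ε μ T u)
    (hu : Continuous u) (hr : 0 ≤ r) (hμ : 0 < μ) (hμ1 : μ ≤ 1) (hT : 0 < T) (hTμ : 1 ≤ T * μ)
    {x : ℝ → ℝ} (hx : Measurable x) (hS : ∀ t ∈ Set.Icc 0 T, HsNorm r (u t) ≤ S) (k : ℤ) :
    ∫⁻ t in Set.Ioc 0 T,
        ‖∫ ξ in dyadicShell (2 ^ k), planeWave μ (x t) 0 ξ * 𝓕 (derivCLM ℂ ℂ (u t)) ξ‖ₑ ^ 2 ≤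
      blockWeight r k ^ 2 * strichartzBound r ε μ T S := by
  have hfourier := (FourierTransform.fourierCLM ℂ 𝓢(ℝ, ℂ)).continuous
  have hderiv := (derivCLM ℂ ℂ).continuous
  have hN : (0 : ℝ) < 2 ^ k := zpow_pos two_pos k
  obtain ⟨n, hn, hM, hstep⟩ := exists_nat_mul_localStrichartzConst_le hμ hT hN hTμ
  have hlin (σ : ℝ) (hσ : σ ∈ Set.Icc 0 T) :=
    (lintegral_dyadicShell_fourier_derivCLM_sq_le hr hN (u σ)).trans <| mul_le_mul_right
      ((sobolevEnergy_fourier r (u σ)).trans_le (pow_le_pow_left' (hS σ hσ) 2)) _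
  have hnonlin (σ : ℝ) (hσ : σ ∈ Set.Icc 0 T) :=
    (lintegral_dyadicShell_nonlinearity_sq_le ε hr hN (schwartzSq (u σ))).trans <| mul_le_mul_right
      ((sobolevEnergy_fourier_schwartzSq_le hr (u σ)).trans
        (mul_le_mul_right (pow_le_pow_left' (pow_le_pow_left' (hS σ hσ) 2) 2) _)) _
  exact ((h.isMildSolution_deriv hμ hu).lintegral_enorm_setIntegral_sq_le_nat_mul hμ hμ1 hN hT hx
    (continuous_uncurry_schwartz (hfourier.comp (hderiv.comp hu)))
    (continuous_const.mul (continuous_uncurry_schwartz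
      (hfourier.comp (hderiv.comp (hderiv.comp (continuous_schwartzSq.comp hu))))))
    hlin hnonlin hn).trans
    (nat_mul_two_mul_le_blockWeight_sq_mul_strichartzBound hμ hT hM hstep)

lemma deriv_eq_integral_planeWave (μ : ℝ) (f : 𝓢(ℝ, ℂ)) (x : ℝ) :
    deriv f x = ∫ ξ, planeWave μ x 0 ξ * 𝓕 (derivCLM ℂ ℂ f) ξ := by
  rw [← fourierInv_eq_integral_planeWave, ← SchwartzMap.fourierInv_coe,
    FourierTransform.fourierInv_fourier_eq, derivCLM_apply]

lemma enorm_deriv_sq_le (r : ℝ) (f : 𝓢(ℝ, ℂ)) (x : ℝ) :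
    ‖deriv f x‖ₑ ^ 2 ≤
      ENNReal.ofReal (2 * Real.pi) ^ 2 * sobolevEmbeddingConst r * HsNorm r f ^ 2 := by
  have hpt : ∀ ξ, ‖planeWave 1 x 0 ξ * 𝓕 (derivCLM ℂ ℂ f) ξ‖ₑ ≤
      ENNReal.ofReal (2 * Real.pi) * (sobolevWeight 1 ξ * ‖𝓕 f ξ‖ₑ) := fun ξ ↦ by
    rw [sobolevWeight, Real.rpow_one, ← ofReal_norm, ← ofReal_norm,
      ← ENNReal.ofReal_mul (jap_pos ξ).le, ← ENNReal.ofReal_mul Real.two_pi_pos.le, norm_mul,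
      norm_planeWave, one_mul, norm_fourier_derivCLM, mul_assoc]
    gcongr
    exact abs_le_jap ξ
  calc ‖deriv f x‖ₑ ^ 2
      ≤ (∫⁻ ξ, ENNReal.ofReal (2 * Real.pi) * (sobolevWeight 1 ξ * ‖𝓕 f ξ‖ₑ)) ^ 2 := by
        rw [deriv_eq_integral_planeWave 1]
        gcongr
        exact (enorm_integral_le_lintegral_enorm _).trans (lintegral_mono hpt)
    _ = ENNReal.ofReal (2 * Real.pi) ^ 2 * (∫⁻ ξ, sobolevWeight 1 ξ * ‖𝓕 f ξ‖ₑ) ^ 2 := by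
        rw [lintegral_const_mul' _ _ ENNReal.ofReal_ne_top, mul_pow]
    _ ≤ ENNReal.ofReal (2 * Real.pi) ^ 2 *
        (sobolevEmbeddingConst r * sobolevEnergy r (𝓕 f : 𝓢(ℝ, ℂ))) := by
        gcongr
        exact sq_lintegral_sobolevWeight_one_mul_enorm_le r (𝓕 f : 𝓢(ℝ, ℂ)).continuous.measurable
    _ = _ := by rw [sobolevEnergy_fourier, mul_assoc]

lemma measurable_enorm_integral_dyadicShell_sq (hu : Continuous u) (hμ : 0 < μ) {x : ℝ → ℝ}
    (hx : Measurable x) (N : ℝ) :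
    Measurable fun t ↦
      ‖∫ ξ in dyadicShell N, planeWave μ (x t) 0 ξ * 𝓕 (derivCLM ℂ ℂ (u t)) ξ‖ₑ ^ 2 := by
  have hfourier : Continuous (Function.uncurry fun t ξ ↦ 𝓕 (derivCLM ℂ ℂ (u t)) ξ) :=
    continuous_uncurry_schwartz ((FourierTransform.fourierCLM ℂ 𝓢(ℝ, ℂ)).continuous.comp
      ((derivCLM ℂ ℂ).continuous.comp hu))
  have hmeas : StronglyMeasurable fun p : ℝ × ℝ ↦
      planeWave μ (x p.1) 0 p.2 * 𝓕 (derivCLM ℂ ℂ (u p.1)) p.2 :=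
    ((measurable_planeWave hμ (hx.comp measurable_fst) measurable_const measurable_snd).mul
      hfourier.measurable).stronglyMeasurable
  exact (hmeas.integral_prod_right'
    (ν := volume.restrict (dyadicShell N))).measurable.enorm.pow_const 2

lemma IsWhithamSolution.lintegral_enorm_deriv_sq_le (h : IsWhithamSolution ε μ T u)
    (hu : Continuous u) (hr : 0 ≤ r) (hμ : 0 < μ) (hμ1 : μ ≤ 1) (hT : 0 < T) (hTμ : 1 ≤ T * μ)
    {x : ℝ → ℝ} (hx : Measurable x) (hS : ∀ t ∈ Set.Icc 0 T, HsNorm r (u t) ≤ S) :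
    ∫⁻ t in Set.Ioc 0 T, ‖deriv (u t) (x t)‖ₑ ^ 2 ≤
      (∑' k, blockWeight r k) ^ 2 * strichartzBound r ε μ T S := by
  set P : ℤ → ℝ → ℝ≥0∞ := fun k t ↦
    ‖∫ ξ in dyadicShell (2 ^ k), planeWave μ (x t) 0 ξ * 𝓕 (derivCLM ℂ ℂ (u t)) ξ‖ₑ
  have hP (k : ℤ) : Measurable fun t ↦ (blockWeight r k)⁻¹ * P k t ^ 2 :=
    (measurable_enorm_integral_dyadicShell_sq hu hμ hx (2 ^ k)).const_mul _
  calc ∫⁻ t in Set.Ioc 0 T, ‖deriv (u t) (x t)‖ₑ ^ 2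
      ≤ ∫⁻ t in Set.Ioc 0 T, (∑' k, blockWeight r k) * ∑' k, (blockWeight r k)⁻¹ * P k t ^ 2 := by
        refine lintegral_mono fun t ↦ ?_
        refine le_trans ?_ (sq_tsum_le_tsum_mul_tsum (blockWeight r) (P · t) (blockWeight_ne_zero r)
          (blockWeight_ne_top r))
        rw [deriv_eq_integral_planeWave μ]
        gcongr
        exact enorm_integral_le_tsum_dyadicShell (integrable_planeWave_mul
          (𝓕 (derivCLM ℂ ℂ (u t)) : 𝓢(ℝ, ℂ)).integrable hμ (x t) 0)
    _ = (∑' k, blockWeight r k) * ∑' k, (blockWeight r k)⁻¹ * ∫⁻ t in Set.Ioc 0 T, P k t ^ 2 := by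
        rw [lintegral_const_mul _ (Measurable.tsum hP),
          lintegral_tsum fun k ↦ (hP k).aemeasurable]
        simp only [lintegral_const_mul' _ _ (ENNReal.inv_ne_top.2 (blockWeight_ne_zero r _))]
    _ ≤ (∑' k, blockWeight r k) * ∑' k, blockWeight r k * strichartzBound r ε μ T S := by
        refine mul_le_mul_right (ENNReal.tsum_le_tsum fun k ↦ ?_) _
        refine (mul_le_mul_right
          (h.lintegral_enorm_dyadicShell_sq_le hu hr hμ hμ1 hT hTμ hx hS k) _).trans_eq ?_
        rw [sq, mul_assoc, ← mul_assoc, ENNReal.inv_mul_cancel (blockWeight_ne_zero r k)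
          (blockWeight_ne_top r k), one_mul]
    _ = _ := by
        rw [ENNReal.tsum_mul_right]
        ring

end FrequencyBlocks

section RefinedEstimate

variable {r θ ε μ T : ℝ} {u : ℝ → 𝓢(ℝ, ℂ)} {S : ℝ≥0∞}

lemma le_sq_of_mul_le_one (hθ : 0 ≤ θ) (hθ1 : θ ≤ 1 / 2) (hμ : 0 < μ) (hT : 0 < T)
    (hTμ : T * μ ≤ 1) :
    T ≤ (μ ^ (-(1 : ℝ) / 5 + 2 * θ / 5) * T ^ ((3 : ℝ) / 10 + 2 * θ / 5)) ^ 2 := by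
  have hone : 1 ≤ (T * μ) ^ (2 * (-(1 : ℝ) / 5 + 2 * θ / 5)) :=
    Real.one_le_rpow_of_pos_of_le_one_of_nonpos (by positivity) hTμ (by linarith)
  calc T ≤ T * (T * μ) ^ (2 * (-(1 : ℝ) / 5 + 2 * θ / 5)) := le_mul_of_one_le_right hT.le hone
    _ = _ := by
      symm
      rw [Real.mul_rpow hT.le hμ.le, mul_pow, ← Real.rpow_mul_natCast hμ.le,
        ← Real.rpow_mul_natCast hT.le, ← mul_assoc, ← Real.rpow_one_add' hT.le (by linarith),
        mul_comm]
      congr 2 <;> push_cast <;> ring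

lemma linearScale_le (hθ : 0 ≤ θ) (hμ : 0 < μ) (hT : 0 < T) (hTμ : 1 ≤ T * μ) :
    linearScale μ T ≤ μ ^ (-(1 : ℝ) / 5 + 2 * θ / 5) * T ^ ((3 : ℝ) / 10 + 2 * θ / 5) := by
  have hone : 1 ≤ (T * μ) ^ (2 * θ / 5) := Real.one_le_rpow hTμ (by linarith)
  calc linearScale μ T ≤ linearScale μ T * (T * μ) ^ (2 * θ / 5) :=
        le_mul_of_one_le_right (linearScale_pos hμ hT).le hone
    _ = _ := by
      rw [Real.mul_rpow hT.le hμ.le, Real.rpow_add hμ, Real.rpow_add hT, linearScale]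
      ring

lemma linearScale_mul_stepScale_le (hθ : 0 ≤ θ) (hμ : 0 < μ) (hT : 0 < T) (hTμ : 1 ≤ T * μ) :
    linearScale μ T * stepScale μ T ≤
      μ ^ (-(2 : ℝ) / 5 + θ / 5) * T ^ ((11 : ℝ) / 10 + θ / 5) := by
  have hone : 1 ≤ (T * μ) ^ (θ / 5) := Real.one_le_rpow hTμ (by linarith)
  have hprod : linearScale μ T * stepScale μ T = μ ^ (-(2 : ℝ) / 5) * T ^ ((11 : ℝ) / 10) := by
    rw [linearScale, stepScale, mul_mul_mul_comm, ← Real.rpow_add hμ, ← Real.rpow_add hT]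
    norm_num
  calc linearScale μ T * stepScale μ T
      ≤ μ ^ (-(2 : ℝ) / 5) * T ^ ((11 : ℝ) / 10) * (T * μ) ^ (θ / 5) := by
        rw [hprod]
        exact le_mul_of_one_le_right (by positivity) hone
    _ = _ := by
      rw [Real.mul_rpow hT.le hμ.le, Real.rpow_add hμ, Real.rpow_add hT]
      ring

/-- The constant of the refined Strichartz estimate for the square of `‖∂ₓη‖_{L²_T L^∞}`: the first
summand serves the times `T ≤ 1 / μ`, the second one the times `T ≥ 1 / μ`. -/
def refinedStrichartzConst (r : ℝ) : ℝ≥0∞ :=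
  ENNReal.ofReal (2 * Real.pi) ^ 2 * sobolevEmbeddingConst r +
    (∑' k, blockWeight r k) ^ 2 * (ENNReal.ofReal 2000 *
      (ENNReal.ofReal (4 * Real.pi) ^ 2 +
        ENNReal.ofReal (8 * Real.pi ^ 2) ^ 2 * sobolevAlgebraConst r))

lemma refinedStrichartzConst_ne_top (hr : 13 / 8 < r) : refinedStrichartzConst r ≠ ⊤ := by
  have hsum := (tsum_blockWeight_lt_top hr).ne
  have hsob := (sobolevEmbeddingConst_lt_top (r := r) (by linarith)).ne
  unfold refinedStrichartzConst sobolevAlgebraConst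
  finiteness

/-- The right-hand side of the refined Strichartz estimate, without its constant. -/
def refinedStrichartzRHS (θ ε μ T : ℝ) (S : ℝ≥0∞) : ℝ≥0∞ :=
  ENNReal.ofReal (μ ^ (-(1 : ℝ) / 5 + 2 * θ / 5) * T ^ ((3 : ℝ) / 10 + 2 * θ / 5)) * S +
    ENNReal.ofReal (|ε| * μ ^ (-(2 : ℝ) / 5 + θ / 5) * T ^ ((11 : ℝ) / 10 + θ / 5)) * S ^ 2

lemma ofReal_mul_sq_le_refinedStrichartzRHS_sq (hθ : 0 ≤ θ) (hθ1 : θ ≤ 1 / 2) (hμ : 0 < μ)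
    (hT : 0 < T) (hTμ : T * μ ≤ 1) :
    ENNReal.ofReal T * S ^ 2 ≤ refinedStrichartzRHS θ ε μ T S ^ 2 := by
  calc ENNReal.ofReal T * S ^ 2
      ≤ (ENNReal.ofReal
          (μ ^ (-(1 : ℝ) / 5 + 2 * θ / 5) * T ^ ((3 : ℝ) / 10 + 2 * θ / 5)) * S) ^ 2 := by
        rw [mul_pow, ← ENNReal.ofReal_pow (by positivity)]
        gcongr
        exact le_sq_of_mul_le_one hθ hθ1 hμ hT hTμ
    _ ≤ _ := pow_le_pow_left' le_self_add 2

lemma strichartzBound_le (hθ : 0 ≤ θ) (hμ : 0 < μ) (hT : 0 < T) (hTμ : 1 ≤ T * μ) :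
    strichartzBound r ε μ T S ≤
      ENNReal.ofReal 2000 * (ENNReal.ofReal (4 * Real.pi) ^ 2 +
        ENNReal.ofReal (8 * Real.pi ^ 2) ^ 2 * sobolevAlgebraConst r) *
        refinedStrichartzRHS θ ε μ T S ^ 2 := by
  have hlin : ENNReal.ofReal (linearScale μ T) * S ≤ refinedStrichartzRHS θ ε μ T S :=
    (mul_le_mul_left (ENNReal.ofReal_le_ofReal (linearScale_le hθ hμ hT hTμ)) S).trans le_self_add
  have hnonlin : ENNReal.ofReal (linearScale μ T) * ENNReal.ofReal (|ε| * stepScale μ T) * S ^ 2 ≤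
      refinedStrichartzRHS θ ε μ T S := by
    refine le_trans (mul_le_mul_left ?_ _) le_add_self
    rw [← ENNReal.ofReal_mul (linearScale_pos hμ hT).le, mul_left_comm, mul_assoc]
    exact ENNReal.ofReal_le_ofReal
      (mul_le_mul_of_nonneg_left (linearScale_mul_stepScale_le hθ hμ hT hTμ) (abs_nonneg ε))
  calc strichartzBound r ε μ T S
      = ENNReal.ofReal 2000 *
          (ENNReal.ofReal (4 * Real.pi) ^ 2 * (ENNReal.ofReal (linearScale μ T) * S) ^ 2 +
            ENNReal.ofReal (8 * Real.pi ^ 2) ^ 2 * sobolevAlgebraConst r *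
              (ENNReal.ofReal (linearScale μ T) * ENNReal.ofReal (|ε| * stepScale μ T) *
                S ^ 2) ^ 2) := by
        rw [strichartzBound, ENNReal.ofReal_mul (p := 8 * Real.pi ^ 2) (by positivity)]
        ring
    _ ≤ ENNReal.ofReal 2000 *
          (ENNReal.ofReal (4 * Real.pi) ^ 2 * refinedStrichartzRHS θ ε μ T S ^ 2 +
            ENNReal.ofReal (8 * Real.pi ^ 2) ^ 2 * sobolevAlgebraConst r *
              refinedStrichartzRHS θ ε μ T S ^ 2) := by gcongr
    _ = _ := by ring

lemma IsWhithamSolution.lintegral_enorm_deriv_sq_le_refined (h : IsWhithamSolution ε μ T u)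
    (hu : Continuous u) (hr : 0 ≤ r) (hθ : 0 ≤ θ) (hθ1 : θ ≤ 1 / 2) (hμ : 0 < μ) (hμ1 : μ ≤ 1)
    (hT : 0 < T) {x : ℝ → ℝ} (hx : Measurable x) (hS : ∀ t ∈ Set.Icc 0 T, HsNorm r (u t) ≤ S) :
    ∫⁻ t in Set.Ioc 0 T, ‖deriv (u t) (x t)‖ₑ ^ 2 ≤
      refinedStrichartzConst r * refinedStrichartzRHS θ ε μ T S ^ 2 := by
  rcases le_total (T * μ) 1 with hTμ | hTμ
  · calc ∫⁻ t in Set.Ioc 0 T, ‖deriv (u t) (x t)‖ₑ ^ 2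
        ≤ ∫⁻ _ in Set.Ioc 0 T,
            ENNReal.ofReal (2 * Real.pi) ^ 2 * sobolevEmbeddingConst r * S ^ 2 :=
          setLIntegral_mono' measurableSet_Ioc fun t ht ↦ (enorm_deriv_sq_le r (u t) (x t)).trans <|
            mul_le_mul_right (pow_le_pow_left' (hS t (Set.Ioc_subset_Icc_self ht)) 2) _
      _ = ENNReal.ofReal (2 * Real.pi) ^ 2 * sobolevEmbeddingConst r *
            (ENNReal.ofReal T * S ^ 2) := by
          rw [setLIntegral_const, Real.volume_Ioc, sub_zero]
          ring
      _ ≤ _ := mul_le_mul' le_self_add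
          (ofReal_mul_sq_le_refinedStrichartzRHS_sq hθ hθ1 hμ hT hTμ)
  · calc ∫⁻ t in Set.Ioc 0 T, ‖deriv (u t) (x t)‖ₑ ^ 2
        ≤ (∑' k, blockWeight r k) ^ 2 * strichartzBound r ε μ T S :=
          h.lintegral_enorm_deriv_sq_le hu hr hμ hμ1 hT hTμ hx hS
      _ ≤ (∑' k, blockWeight r k) ^ 2 * (ENNReal.ofReal 2000 *
            (ENNReal.ofReal (4 * Real.pi) ^ 2 +
              ENNReal.ofReal (8 * Real.pi ^ 2) ^ 2 * sobolevAlgebraConst r) *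
            refinedStrichartzRHS θ ε μ T S ^ 2) :=
          mul_le_mul_right (strichartzBound_le hθ hμ hT hTμ) _
      _ ≤ _ := by
          rw [← mul_assoc]
          exact mul_le_mul_left le_add_self _

lemma IsWhithamSolution.lintegral_eLpNorm_deriv_sq_le (h : IsWhithamSolution ε μ T u)
    (hu : Continuous u) (hr : 0 ≤ r) (hθ : 0 ≤ θ) (hθ1 : θ ≤ 1 / 2) (hμ : 0 < μ) (hμ1 : μ ≤ 1)
    (hT : 0 < T) (hS : ∀ t ∈ Set.Icc 0 T, HsNorm r (u t) ≤ S) :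
    ∫⁻ t in Set.Ioc 0 T, eLpNorm (deriv (u t)) ⊤ volume ^ 2 ≤
      refinedStrichartzConst r * refinedStrichartzRHS θ ε μ T S ^ 2 := by
  have hcont : Continuous (Function.uncurry fun t y ↦ ‖deriv (u t) y‖ₑ ^ 2) :=
    (ENNReal.continuous_pow 2).comp
      (continuous_uncurry_schwartz ((derivCLM ℂ ℂ).continuous.comp hu)).enorm
  refine (lintegral_mono fun t ↦ eLpNorm_top_sq_le_iSup volume (deriv (u t))).trans ?_
  exact lintegral_iSup_le_of_forall_measurable hcont.measurable
    (fun t ↦ (hcont.comp (Continuous.prodMk_right t)).lowerSemicontinuous) fun x hx ↦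
    h.lintegral_enorm_deriv_sq_le_refined hu hr hθ hθ1 hμ hμ1 hT hx hS

end RefinedEstimate

section Complexification

/-- Complexification of a real Schwartz function; its underlying function is `cc f`. -/
def complexify (f : 𝓢(ℝ, ℝ)) : 𝓢(ℝ, ℂ) := postcompCLM Complex.ofRealCLM f

lemma coe_complexify (f : 𝓢(ℝ, ℝ)) : ⇑(complexify f) = cc f := rfl

lemma continuous_complexify : Continuous complexify := (postcompCLM Complex.ofRealCLM).continuous

lemma deriv_cc {f : ℝ → ℝ} (hf : Differentiable ℝ f) : deriv (cc f) = cc (deriv f) :=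
  funext fun x ↦ (hf x).hasDerivAt.ofReal_comp.deriv

lemma eLpNorm_cc (f : ℝ → ℝ) (p : ℝ≥0∞) (ν : Measure ℝ) : eLpNorm (cc f) p ν = eLpNorm f p ν :=
  eLpNorm_congr_norm_ae (.of_forall fun x ↦ Complex.norm_real (f x))

lemma isWhithamSolution_complexify {ε μ T : ℝ} {η : ℝ → 𝓢(ℝ, ℝ)}
    (h : ∀ t ∈ Set.Icc (0 : ℝ) T, ∀ x : ℝ, HasDerivAt (fun τ ↦ ((η τ x : ℝ) : ℂ))
      (-(sqrtTmul μ (cc (deriv (η t))) x +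
        (ε / 2 : ℂ) * ((deriv (fun y ↦ η t y ^ 2) x : ℝ) : ℂ))) t) :
    IsWhithamSolution ε μ T (fun t ↦ complexify (η t)) := by
  intro t ht x
  have hsq : (fun y ↦ complexify (η t) y ^ 2) = cc (fun y ↦ η t y ^ 2) :=
    funext fun y ↦ (Complex.ofReal_pow (η t y) 2).symm
  have hdiff : Differentiable ℝ fun y ↦ η t y ^ 2 := (η t).differentiable.pow 2
  rw [hsq, coe_complexify, deriv_cc (η t).differentiable, deriv_cc hdiff]
  exact h t ht x

end Complexification

end Whitham

theorem whitham_refined_strichartz_general (r : ℝ) (hr : 13 / 8 < r) :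
    ∃ C : ℝ, 0 < C ∧
      ∀ θ ε μ T : ℝ, 0 ≤ θ → θ ≤ 1 / 2 → 0 < μ → μ ≤ 1 → 0 < T →
        ∀ u : ℝ → 𝓢(ℝ, ℂ), Continuous u → Whitham.IsWhithamSolution ε μ T u →
          (∫⁻ t in Set.Ioc 0 T, eLpNorm (deriv (u t)) ⊤ volume ^ 2) ^ ((1 : ℝ) / 2) ≤
            ENNReal.ofReal C *
              (ENNReal.ofReal
                  (μ ^ (-(1 : ℝ) / 5 + 2 * θ / 5) * T ^ ((3 : ℝ) / 10 + 2 * θ / 5)) *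
                (⨆ t ∈ Set.Icc 0 T, HsNorm r (u t)) +
              ENNReal.ofReal
                  (|ε| * μ ^ (-(2 : ℝ) / 5 + θ / 5) * T ^ ((11 : ℝ) / 10 + θ / 5)) *
                (⨆ t ∈ Set.Icc 0 T, HsNorm r (u t)) ^ 2) := by
  have hfinite : Whitham.refinedStrichartzConst r ^ ((1 : ℝ) / 2) ≠ ⊤ :=
    ENNReal.rpow_ne_top_of_nonneg (by norm_num) (Whitham.refinedStrichartzConst_ne_top hr)
  refine ⟨(Whitham.refinedStrichartzConst r ^ ((1 : ℝ) / 2)).toReal + 1, by positivity, ?_⟩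
  intro θ ε μ T hθ hθ1 hμ hμ1 hT u hu h
  set S := ⨆ t ∈ Set.Icc 0 T, HsNorm r (u t)
  have hS : ∀ t ∈ Set.Icc 0 T, HsNorm r (u t) ≤ S := fun t ht ↦
    le_iSup₂ (f := fun t (_ : t ∈ Set.Icc 0 T) ↦ HsNorm r (u t)) t ht
  have hsq := h.lintegral_eLpNorm_deriv_sq_le hu (by linarith) hθ hθ1 hμ hμ1 hT hS
  calc (∫⁻ t in Set.Ioc 0 T, eLpNorm (deriv (u t)) ⊤ volume ^ 2) ^ ((1 : ℝ) / 2)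
      ≤ (Whitham.refinedStrichartzConst r * Whitham.refinedStrichartzRHS θ ε μ T S ^ 2) ^
          ((1 : ℝ) / 2) := ENNReal.rpow_le_rpow hsq (by norm_num)
    _ = Whitham.refinedStrichartzConst r ^ ((1 : ℝ) / 2) *
          Whitham.refinedStrichartzRHS θ ε μ T S := by
        rw [ENNReal.mul_rpow_of_nonneg _ _ (by norm_num), one_div, ← Nat.cast_ofNat,
          ENNReal.pow_rpow_inv_natCast two_ne_zero]
    _ ≤ _ := mul_le_mul_left (ENNReal.le_ofReal_iff_toReal_le hfinite (by positivity) |>.2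
          (by linarith)) _

/-- Refined Strichartz estimate for solutions of the Whitham equation
(Proposition 4.3): for `r > 13/8` and all small `θ > 0` there is `C = C(r,θ)` such that any
Schwartz-valued `C¹`-in-time solution of `∂_t η + √T_μ(D) ∂_x η + (ε/2) ∂_x(η²) = 0` on `[0,T]`
satisfies `‖∂_x η‖_{L²_T L^∞_x} ≤ C [ μ^{−1/5+2θ/5} T^{3/10+2θ/5} sup_t ‖η‖_{H^r}
+ ε μ^{−2/5+θ/5} T^{11/10+θ/5} (sup_t ‖η‖_{H^r})² ]`. -/
theorem whitham_refined_strichartz (r : ℝ) (hr : 13 / 8 < r) :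
    ∃ θ₀ : ℝ, 0 < θ₀ ∧
      ∀ θ : ℝ, 0 < θ → θ < θ₀ →
        ∃ C : ℝ, 0 < C ∧
          ∀ ε μ : ℝ, 0 < ε → ε ≤ 1 → 0 < μ → μ ≤ 1 →
            ∀ T : ℝ, 0 < T →
              ∀ η : ℝ → 𝓢(ℝ, ℝ), Continuous η →
                -- the Whitham equation `∂_t η = −(√T_μ(D) ∂_x η + (ε/2) ∂_x(η²))` on `[0,T]`
                (∀ t ∈ Set.Icc (0 : ℝ) T, ∀ x : ℝ,
                  HasDerivAt (fun τ => ((η τ x : ℝ) : ℂ))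
                    (-(sqrtTmul μ (cc (deriv (⇑(η t)))) x +
                        (ε / 2 : ℂ) * ((deriv (fun y => (η t y) ^ 2) x : ℝ) : ℂ))) t) →
                (∫⁻ t in Set.Ioc (0 : ℝ) T,
                    eLpNorm (deriv (⇑(η t))) ⊤ volume ^ 2) ^ ((1 : ℝ) / 2)
                  ≤ ENNReal.ofReal C *
                    (ENNReal.ofReal
                        (μ ^ (-(1 : ℝ) / 5 + 2 * θ / 5) * T ^ ((3 : ℝ) / 10 + 2 * θ / 5)) *
                      (⨆ t ∈ Set.Icc (0 : ℝ) T, HsNorm r (cc ⇑(η t))) +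
                    ENNReal.ofReal
                        (ε * μ ^ (-(2 : ℝ) / 5 + θ / 5) * T ^ ((11 : ℝ) / 10 + θ / 5)) *
                      (⨆ t ∈ Set.Icc (0 : ℝ) T, HsNorm r (cc ⇑(η t))) ^ 2) := by
  obtain ⟨C, hC, hgeneral⟩ := whitham_refined_strichartz_general r hr
  refine ⟨1 / 2, by norm_num, fun θ hθ hθ1 ↦ ⟨C, hC, fun ε μ hε _ hμ hμ1 T hT η hη heq ↦ ?_⟩⟩
  simpa only [Whitham.coe_complexify, Whitham.deriv_cc (SchwartzMap.differentiable _),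
    Whitham.eLpNorm_cc, abs_of_pos hε, Function.comp_apply] using
    hgeneral θ ε μ T hθ.le hθ1.le hμ hμ1 hT _ (Whitham.continuous_complexify.comp hη)
      (Whitham.isWhithamSolution_complexify heq)
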